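/- There exists x_0 such that for all real x ≥ x_0, ∏_{p ≤ x, p prime} (1 − 1/p) ≥ (e^{−γ}/log x) · (1 − 1/(2 (log x)^2)). -/

import Mathlib

/-!
The constant `1/2` is generous: the proof gives
`∏_{p ≤ x} (1 - 1/p) = (e^{-γ}/log x)(1 + O(1/log³ x))` from below, and any error term `o(1/log² x)`
is enough. Mathlib has no quantitative prime number theorem, so such an error term is produced here.

*Zeta near the line `Re s = 1`.* Writing `ζ(s) - 1/(s-1)` as a sum of the integrals
`∫_n^{n+1} (n^{-s} - u^{-s}) du` gives `ζ(s) ≪ |s|^θ` for every `θ > 0`, in a half-plane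
`Re s > 1 - θ/2` (`exists_norm_riemannZeta₀_le`). With Cauchy's estimate for `ζ'` and the 3-4-1
inequality this yields a zero-free region of width `|t|^{-5θ}` with a lower bound for `|ζ|`
(`exists_le_norm_riemannZeta`). Cauchy's estimate on discs of that radius bounds each derivative of
`G = -ζ'/ζ - ζ` by `|t|^{1/2}`, uniformly for `Re s > 1` (`exists_norm_iteratedDeriv_G_le`).

*Primes in arithmetic weight.* Up to sign, `G^{(k)}` is the Dirichlet series with coefficients
`(Λ(n) - 1) log^k n`. As `|t|^{1/2}/|s(s+1)|` is integrable, the Perron formula with weight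
`(1 - n/N)₊` can be used with `Re s → 1⁺`, without moving the contour, and gives
`∑_{n < N} ∑_{j ≤ n} (Λ(j) - 1) log^k j = O(N²)` (`exists_abs_sum_psum_le`): the trivial bound
improved by `log^k N`. The inner sum cannot decrease by more than `log^k` per step, so it is
`O(N log^{k/2} N)`. For `k = 6` the saving is three logarithms (`exists_abs_psum_le`), and partial
summation gives `∑_{p ≤ n} 1/p = log log n + c + O(1/log³ n)` (`exists_abs_primeRecip_sub_le`).

*The constant.* As `s → 0⁺`, the Euler product and the residue of `ζ` at `1` give
`∑_p p^{-1-s} + log s → -∑_p (-log(1 - 1/p) - 1/p)`, while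
`∑_p p^{-1-s} = ∫_0^∞ e^{-y} ∑_{p ≤ e^{y/s}} 1/p dy` gives the limit
`c + ∫_0^∞ e^{-y} log y dy = c - γ`. Hence `c = γ - ∑_p (-log(1 - 1/p) - 1/p)`
(`mertens_const_eq`), and exponentiating finishes the proof.
-/

namespace MertensThird

open Complex Filter Topology

/-! ### Growth of the zeta function -/

/-- The term `(s - 1) ∫_{n+1}^{n+2} ((n+1)^{-s} - u^{-s}) du`, with the integral evaluated. The terms sum to
`(s - 1) ζ(s) - 1`; the factor `s - 1` keeps them entire. -/
noncomputable def zetaTerm (n : ℕ) (s : ℂ) : ℂ :=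
  (s - 1) * ((n : ℂ) + 1) ^ (-s) + (((n : ℂ) + 2) ^ (1 - s) - ((n : ℂ) + 1) ^ (1 - s))

lemma norm_cpow_sub_le (s : ℂ) (hs : 0 < s.re) (a u : ℝ) (ha : 1 ≤ a) (hu : u ∈ Set.Icc a (a + 1)) :
    ‖(u : ℂ) ^ (-s) - (a : ℂ) ^ (-s)‖ ≤ ‖s‖ * a ^ (-s.re - 1) := by
  have hder : ∀ x ∈ Set.Icc a (a + 1), HasDerivWithinAt (fun x : ℝ ↦ (x : ℂ) ^ (-s))
      ((-s) * (x : ℂ) ^ (-s - 1)) (Set.Icc a (a + 1)) x := by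
    intro x hx
    have hx0 : 0 < x := by linarith [hx.1]
    have h := ((hasDerivAt_id (x : ℂ)).cpow_const (c := -s) (Or.inl (by simpa using hx0)))
    have := h.comp_ofReal
    simpa using this.hasDerivWithinAt
  have := norm_image_sub_le_of_norm_deriv_le_segment' hder (C := ‖s‖ * a ^ (-s.re - 1)) ?_ u hu
  · refine this.trans ?_
    have h1 : 0 ≤ ‖s‖ * a ^ (-s.re - 1) := by positivity
    nlinarith [hu.2]
  · intro x hx
    have hx0 : 0 < x := by linarith [hx.1]
    rw [norm_mul, norm_neg, norm_cpow_eq_rpow_re_of_pos hx0]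
    gcongr
    simp only [sub_re, neg_re, one_re]
    exact Real.rpow_le_rpow_of_nonpos (by linarith) hx.1 (by linarith)

lemma norm_cpow_sub_le' (s : ℂ) (hs : 0 < s.re) (a u : ℝ) (ha : 1 ≤ a) (hu : u ∈ Set.Icc a (a + 1)) :
    ‖(u : ℂ) ^ (-s) - (a : ℂ) ^ (-s)‖ ≤ 2 * a ^ (-s.re) := by
  refine (norm_sub_le _ _).trans ?_
  have hx0 : 0 < u := by linarith [hu.1]
  rw [norm_cpow_eq_rpow_re_of_pos hx0, norm_cpow_eq_rpow_re_of_pos (by linarith)]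
  have : u ^ (-s).re ≤ a ^ (-s).re :=
    Real.rpow_le_rpow_of_nonpos (by linarith) hu.1 (by simp; linarith)
  simp only [neg_re] at *
  linarith

/-- The two bounds `|s| a^{-σ-1}` and `2 a^{-σ}` for `u^{-s} - a^{-s}`, interpolated with exponents `θ`
and `1 - θ`, give a bound summable in `n` to the left of `Re s = 1`. -/
lemma norm_zetaTerm_le {θ : ℝ} (h0 : 0 < θ) (h1 : θ < 1) (n : ℕ) (s : ℂ) (hs : 1 - θ / 2 ≤ s.re) :
    ‖zetaTerm n s‖ ≤ ‖s - 1‖ * (2 * ‖s‖ ^ θ * ((n : ℝ) + 1) ^ (-(1 + θ / 2))) := by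
  have hs0 : 0 < s.re := by linarith
  set a : ℝ := n + 1 with ha
  have ha1 : 1 ≤ a := by rw [ha]; linarith [n.cast_nonneg (α := ℝ)]
  have key : ∀ u ∈ Set.Icc a (a + 1), ‖(u : ℂ) ^ (-s) - (a : ℂ) ^ (-s)‖ ≤
      2 * ‖s‖ ^ θ * a ^ (-(1 + θ / 2)) := by
    intro u hu
    have hA := norm_cpow_sub_le s hs0 a u ha1 hu
    have hB := norm_cpow_sub_le' s hs0 a u ha1 hu
    set X := ‖(u : ℂ) ^ (-s) - (a : ℂ) ^ (-s)‖ with hX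
    have hX0 : 0 ≤ X := norm_nonneg _
    calc X = X ^ θ * X ^ (1 - θ) := by
          rw [← Real.rpow_add_of_nonneg hX0 h0.le (by linarith)]; simp
      _ ≤ (‖s‖ * a ^ (-s.re - 1)) ^ θ * (2 * a ^ (-s.re)) ^ (1 - θ) := by
          gcongr
      _ = 2 ^ (1 - θ) * ‖s‖ ^ θ * a ^ (-s.re - θ) := by
          rw [Real.mul_rpow (by positivity) (by positivity),
            Real.mul_rpow (by positivity) (by positivity), ← Real.rpow_mul (by positivity),
            ← Real.rpow_mul (by positivity)]
          have : a ^ (-s.re - θ) = a ^ ((-s.re - 1) * θ) * a ^ (-s.re * (1 - θ)) := by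
            rw [← Real.rpow_add (by positivity)]; ring_nf
          rw [this]; ring
      _ ≤ 2 * ‖s‖ ^ θ * a ^ (-(1 + θ / 2)) := by
          gcongr
          · calc (2 : ℝ) ^ (1 - θ) ≤ 2 ^ (1 : ℝ) :=
                Real.rpow_le_rpow_of_exponent_le (by norm_num) (by linarith)
              _ = 2 := by simp
          · linarith
  have hder : ∀ x ∈ Set.Icc a (a + 1), HasDerivWithinAt
      (fun x : ℝ ↦ (s - 1) * ((x : ℂ) * (a : ℂ) ^ (-s)) + (x : ℂ) ^ (1 - s))
      ((s - 1) * (1 * (a : ℂ) ^ (-s)) + (1 - s) * (x : ℂ) ^ (-s)) (Set.Icc a (a + 1)) x := by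
    intro x hx
    have hx0 : 0 < x := by linarith [hx.1]
    have h := ((hasDerivAt_id (x : ℂ)).cpow_const (c := 1 - s) (Or.inl (by simpa using hx0)))
    have h2 := ((hasDerivAt_id (x : ℂ)).mul_const ((a : ℂ) ^ (-s))).const_mul (s - 1)
    have := (h2.add h).comp_ofReal
    simpa using this.hasDerivWithinAt
  have := norm_image_sub_le_of_norm_deriv_le_segment' hder
    (C := ‖s - 1‖ * (2 * ‖s‖ ^ θ * a ^ (-(1 + θ / 2)))) ?_ (a + 1) (by simp)
  · have e : zetaTerm n s = ((s - 1) * (((a + 1 : ℝ) : ℂ) * (a : ℂ) ^ (-s)) + ((a + 1 : ℝ) : ℂ) ^ (1 - s))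
        - ((s - 1) * ((a : ℂ) * (a : ℂ) ^ (-s)) + (a : ℂ) ^ (1 - s)) := by
      have e2 : ((a + 1 : ℝ) : ℂ) = n + 2 := by rw [ha]; push_cast; ring
      have e1 : (a : ℂ) = n + 1 := by rw [ha]; push_cast; ring
      rw [e1, e2, zetaTerm]; ring
    rw [e]
    refine this.trans ?_
    simp
  · intro x hx
    have : (s - 1) * (1 * (a : ℂ) ^ (-s)) + (1 - s) * (x : ℂ) ^ (-s)
      = (1 - s) * ((x : ℂ) ^ (-s) - (a : ℂ) ^ (-s)) := by ring
    rw [this, norm_mul, norm_sub_rev 1 s]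
    gcongr
    exact key x ⟨hx.1, hx.2.le⟩

lemma summable_rpow_aux {θ : ℝ} (h0 : 0 < θ) :
    Summable (fun n : ℕ ↦ ((n : ℝ) + 1) ^ (-(1 + θ / 2))) := by
  have := (summable_nat_add_iff 1).mpr (Real.summable_nat_rpow (p := -(1 + θ / 2)) |>.mpr (by linarith))
  simpa using this

lemma tsum_zetaTerm_of_one_lt (s : ℂ) (hs : 1 < s.re) :
    ∑' n, zetaTerm n s = riemannZeta₁ s - 1 := by
  have hs1 : s ≠ 1 := by rintro rfl; simp at hs
  have hsum : Summable (fun n ↦ zetaTerm n s) := by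
    refine Summable.of_norm_bounded (g := fun n : ℕ ↦ ‖s - 1‖ * (2 * ‖s‖ ^ (1/2 : ℝ) * ((n : ℝ) + 1) ^ (-(1 + (1/2 : ℝ) / 2))))
      ?_ fun n ↦ norm_zetaTerm_le (by norm_num) (by norm_num) n s (by linarith)
    exact ((summable_rpow_aux (by norm_num)).mul_left _).mul_left _
  have hz : Summable (fun n : ℕ ↦ ((n : ℂ) + 1) ^ (-s)) := by
    have := (summable_nat_add_iff 1).mpr (Complex.summable_one_div_nat_cpow (p := s) |>.mpr hs)
    simpa [cpow_neg] using this
  have h1 := (hz.hasSum.mul_left (s - 1)).tendsto_sum_nat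
  have h2 : Tendsto (fun N : ℕ ↦ ∑ n ∈ Finset.range N,
      (((n : ℂ) + 2) ^ (1 - s) - ((n : ℂ) + 1) ^ (1 - s))) atTop (𝓝 (0 - 1)) := by
    have e : ∀ N : ℕ, ∑ n ∈ Finset.range N, (((n : ℂ) + 2) ^ (1 - s) - ((n : ℂ) + 1) ^ (1 - s))
        = ((N : ℂ) + 1) ^ (1 - s) - 1 := by
      intro N
      induction N with
      | zero => simp
      | succ N ih => rw [Finset.sum_range_succ, ih]; push_cast; ring_nf
    simp_rw [e]
    refine Tendsto.sub_const ?_ 1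
    rw [tendsto_zero_iff_norm_tendsto_zero]
    have : ∀ N : ℕ, ‖((N : ℂ) + 1) ^ (1 - s)‖ = ((N : ℝ) + 1) ^ (-(s.re - 1)) := by
      intro N
      have := norm_cpow_eq_rpow_re_of_pos (x := (N : ℝ) + 1) (by positivity) (1 - s)
      push_cast at this
      rw [this]; simp
    simp_rw [this]
    exact (tendsto_rpow_neg_atTop (by linarith)).comp
      (tendsto_atTop_add_const_right _ 1 tendsto_natCast_atTop_atTop)
  have h3 := hsum.hasSum.tendsto_sum_nat
  have h4 := h1.add h2
  simp_rw [← Finset.sum_add_distrib] at h4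
  rw [tendsto_nhds_unique h3 h4]
  have hzeta : ∑' n : ℕ, ((n : ℂ) + 1) ^ (-s) = riemannZeta s := by
    rw [zeta_eq_tsum_one_div_nat_add_one_cpow hs]
    simp [cpow_neg]
  have hs2 : s - 1 ≠ 0 := sub_ne_zero.mpr hs1
  rw [hzeta, riemannZeta_eq_inv_sub_mul hs1]
  field_simp
  ring

lemma differentiable_zetaTerm (n : ℕ) : Differentiable ℂ (zetaTerm n) := by
  have h1 : ((n : ℂ) + 1) ≠ 0 := by exact_mod_cast n.succ_ne_zero
  have h2 : ((n : ℂ) + 2) ≠ 0 := by exact_mod_cast (n+1).succ_ne_zero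
  unfold zetaTerm
  have e1 : Differentiable ℂ (fun s : ℂ ↦ ((n : ℂ) + 1) ^ (-s)) :=
    (differentiable_id.neg).const_cpow (Or.inl h1)
  have e2 : Differentiable ℂ (fun s : ℂ ↦ ((n : ℂ) + 2) ^ (1 - s)) :=
    ((differentiable_const 1).sub differentiable_id).const_cpow (Or.inl h2)
  have e3 : Differentiable ℂ (fun s : ℂ ↦ ((n : ℂ) + 1) ^ (1 - s)) :=
    ((differentiable_const 1).sub differentiable_id).const_cpow (Or.inl h1)
  fun_prop

/-- Analytic continuation of `tsum_zetaTerm_of_one_lt` to the half-plane where the series converges. -/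
lemma tsum_zetaTerm {θ : ℝ} (h0 : 0 < θ) (h1 : θ < 1) (s : ℂ) (hs : 1 - θ / 2 < s.re) :
    ∑' n, zetaTerm n s = riemannZeta₁ s - 1 := by
  set R : ℝ := ‖s‖ + 3 with hR
  set U : Set ℂ := {z : ℂ | 1 - θ / 2 < z.re} ∩ Metric.ball 0 R with hU
  have hUo : IsOpen U := (isOpen_lt continuous_const continuous_re).inter Metric.isOpen_ball
  have hUc : Convex ℝ U := (convex_halfSpace_re_gt _).inter (convex_ball 0 R)
  have hd : DifferentiableOn ℂ (fun z ↦ ∑' n, zetaTerm n z) U := by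
    refine Complex.differentiableOn_tsum_of_summable_norm
      (u := fun n : ℕ ↦ (R + 1) * (2 * R ^ θ * ((n : ℝ) + 1) ^ (-(1 + θ / 2)))) ?_
      (fun n ↦ (differentiable_zetaTerm n).differentiableOn) hUo ?_
    · exact ((summable_rpow_aux h0).mul_left _).mul_left _
    · intro n z hz
      have hzR : ‖z‖ ≤ R := by simpa using (Metric.mem_ball.mp hz.2).le
      refine (norm_zetaTerm_le h0 h1 n z (le_of_lt hz.1)).trans ?_
      gcongr
      refine (norm_sub_le _ _).trans ?_
      simpa using hzR
  have hA := hd.analyticOnNhd hUo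
  have hB : AnalyticOnNhd ℂ (fun z ↦ riemannZeta₁ z - 1) U :=
    ((differentiable_riemannZeta₁.sub_const 1).differentiableOn).analyticOnNhd hUo
  have h2U : (2 : ℂ) ∈ U := by
    refine ⟨by simp; linarith, ?_⟩
    have : ‖(2 : ℂ)‖ < R := by rw [hR]; norm_num; linarith [norm_nonneg s]
    simpa using this
  refine hA.eqOn_of_preconnected_of_eventuallyEq hB hUc.isPreconnected h2U ?_ ⟨hs, by simp [hR]⟩
  have : {z : ℂ | 1 < z.re} ∈ 𝓝 (2 : ℂ) := (isOpen_lt continuous_const continuous_re).mem_nhds (by simp)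
  filter_upwards [this] with z hz using tsum_zetaTerm_of_one_lt z hz

/-- The regular part `ζ(s) - 1/(s-1)` grows at most like `|s|^θ` near the line `Re s = 1`. -/
theorem exists_norm_riemannZeta₀_le {θ : ℝ} (h0 : 0 < θ) (h1 : θ < 1) :
    ∃ C : ℝ, 0 < C ∧ ∀ s : ℂ, 1 - θ / 2 < s.re → s ≠ 1 → ‖riemannZeta₀ s‖ ≤ C * ‖s‖ ^ θ := by
  set K := ∑' n : ℕ, ((n : ℝ) + 1) ^ (-(1 + θ / 2)) with hK
  have hK0 : 0 ≤ K := tsum_nonneg fun n ↦ by positivity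
  refine ⟨2 * K + 1, by positivity, fun s hs hs1 ↦ ?_⟩
  have h := tsum_zetaTerm h0 h1 s hs
  have hpos : 0 < ‖s - 1‖ := norm_pos_iff.mpr (sub_ne_zero.mpr hs1)
  have hb : ‖riemannZeta₁ s - 1‖ ≤ ‖s - 1‖ * (2 * ‖s‖ ^ θ * K) := by
    rw [← h]
    refine tsum_of_norm_bounded ?_ (fun n ↦ norm_zetaTerm_le h0 h1 n s hs.le)
    exact ((summable_rpow_aux h0).hasSum.mul_left _).mul_left _
  have e : riemannZeta₁ s - 1 = (s - 1) * riemannZeta₀ s := by simp [riemannZeta₁]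
  rw [e, norm_mul] at hb
  have := le_of_mul_le_mul_left hb hpos
  have h3 : 0 ≤ ‖s‖ ^ θ := by positivity
  nlinarith

/-! ### A zero-free region -/

lemma ne_one_of_im {s : ℂ} (h : 1 ≤ |s.im|) : s ≠ 1 := by
  rintro rfl; norm_num at h

lemma mul_rpow_le_mul {θ : ℝ} (h0 : 0 < θ) (h1 : θ < 1) {m T : ℝ} (hm : 1 ≤ m) (hT : 0 ≤ T) :
    (m * T) ^ θ ≤ m * T ^ θ := by
  rw [Real.mul_rpow (by linarith) hT]
  gcongr
  calc m ^ θ ≤ m ^ (1 : ℝ) := Real.rpow_le_rpow_of_exponent_le hm h1.le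
    _ = m := by simp

lemma exists_norm_riemannZeta_le {θ : ℝ} (h0 : 0 < θ) (h1 : θ < 1) :
    ∃ C : ℝ, 0 < C ∧ ∀ s : ℂ, 1 - θ / 2 < s.re → s.re ≤ 3 → 1 ≤ |s.im| →
      ‖riemannZeta s‖ ≤ C * |s.im| ^ θ := by
  obtain ⟨C, hC, h⟩ := exists_norm_riemannZeta₀_le h0 h1
  refine ⟨4 * C + 1, by positivity, fun s hs hs3 him ↦ ?_⟩
  have hs1 := ne_one_of_im him
  have h2 := h s hs hs1
  rw [riemannZeta_eq_inv_sub_add hs1]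
  have h3 : ‖s‖ ≤ 4 * |s.im| := by
    refine (norm_le_abs_re_add_abs_im s).trans ?_
    rw [abs_of_pos (by linarith)]; linarith
  have h4 : ‖s‖ ^ θ ≤ 4 * |s.im| ^ θ :=
    (Real.rpow_le_rpow (norm_nonneg _) h3 h0.le).trans
      (mul_rpow_le_mul h0 h1 (by norm_num) (abs_nonneg _))
  have h5 : (1 : ℝ) ≤ |s.im| ^ θ := Real.one_le_rpow him h0.le
  have h6 : ‖(s - 1)⁻¹‖ ≤ 1 := by
    rw [norm_inv]
    refine inv_le_one_of_one_le₀ (him.trans ?_)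
    simpa using abs_im_le_norm (s - 1)
  calc ‖(s - 1)⁻¹ + riemannZeta₀ s‖ ≤ 1 + C * (4 * |s.im| ^ θ) := by
        refine (norm_add_le _ _).trans (add_le_add h6 (h2.trans ?_))
        gcongr
    _ ≤ _ := by nlinarith

lemma sphere_bounds {s z : ℂ} {r : ℝ} (hz : ‖z - s‖ ≤ r) :
    |z.re - s.re| ≤ r ∧ |s.im| - r ≤ |z.im| ∧ |z.im| ≤ |s.im| + r := by
  have h1 := (abs_re_le_norm (z - s)).trans hz
  have h2 := (abs_im_le_norm (z - s)).trans hz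
  simp only [sub_re, sub_im] at h1 h2
  have h3 := abs_sub_abs_le_abs_sub z.im s.im
  have h4 := abs_sub_abs_le_abs_sub s.im z.im
  rw [abs_sub_comm] at h4
  exact ⟨h1, by linarith, by linarith⟩

lemma exists_norm_deriv_riemannZeta_le {θ : ℝ} (h0 : 0 < θ) (h1 : θ < 1) :
    ∃ C : ℝ, 0 < C ∧ ∀ s : ℂ, 1 - θ / 4 ≤ s.re → s.re ≤ 2 → 2 ≤ |s.im| →
      ‖deriv riemannZeta s‖ ≤ C * |s.im| ^ θ := by
  obtain ⟨C, hC, h⟩ := exists_norm_riemannZeta_le h0 h1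
  refine ⟨2 * C / (θ / 8), by positivity, fun s hs hs3 him ↦ ?_⟩
  have hR : 0 < θ / 8 := by positivity
  have hb : ∀ z : ℂ, ‖z - s‖ ≤ θ / 8 → 1 - θ / 2 < z.re ∧ z.re ≤ 3 ∧ 1 ≤ |z.im| ∧
      |z.im| ≤ 2 * |s.im| := by
    intro z hz
    obtain ⟨a, b, c⟩ := sphere_bounds hz
    rw [abs_le] at a
    refine ⟨by linarith, by linarith, by linarith, by linarith⟩
  have := Complex.norm_deriv_le_of_forall_mem_sphere_norm_le (c := s) (R := θ / 8)
    (C := 2 * C * |s.im| ^ θ) (f := riemannZeta) hR ?_ ?_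
  · refine this.trans (le_of_eq (by ring))
  · refine DifferentiableOn.diffContOnCl fun z hz ↦ ?_
    rw [closure_ball _ hR.ne'] at hz
    exact (differentiableAt_riemannZeta (ne_one_of_im (hb z (by simpa [dist_eq] using hz)).2.2.1)).differentiableWithinAt
  · intro z hz
    obtain ⟨a, b, c, d⟩ := hb z (by simpa [dist_eq] using hz.le)
    refine (h z a b c).trans ?_
    have : |z.im| ^ θ ≤ 2 * |s.im| ^ θ :=
      (Real.rpow_le_rpow (abs_nonneg _) d h0.le).trans
        (mul_rpow_le_mul h0 h1 (by norm_num) (abs_nonneg _))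
    nlinarith

/-- The 3-4-1 inequality. -/
lemma one_le_norm_riemannZeta_prod {x : ℝ} (hx : 0 < x) (y : ℝ) :
    1 ≤ ‖riemannZeta (1 + x)‖ ^ 3 * ‖riemannZeta (1 + x + I * y)‖ ^ 4 *
      ‖riemannZeta (1 + x + 2 * I * y)‖ := by
  have := DirichletCharacter.norm_LFunction_product_ge_one (N := 1) 1 hx y
  simpa [DirichletCharacter.LFunctionTrivChar, DirichletCharacter.LFunction_modOne_eq] using this

/-- A zero-free region for `ζ`, with a lower bound on `|ζ|` in it. The 3-4-1 inequality gives the bound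
for `Re s ≥ 1 + η`, and the bound on `ζ'` carries it a distance `2η` to the left, where
`η = c |t|^{-5θ}`. -/
lemma exists_le_norm_riemannZeta {θ : ℝ} (h0 : 0 < θ) (h1 : θ < 1) :
    ∃ c b : ℝ, 0 < c ∧ c ≤ θ / 8 ∧ 0 < b ∧ ∀ s : ℂ, 2 ≤ |s.im| →
      1 - c / (|s.im| ^ θ) ^ 5 ≤ s.re → s.re ≤ 2 → b / (|s.im| ^ θ) ^ 4 ≤ ‖riemannZeta s‖ := by
  obtain ⟨C₀, hC₀, hz0⟩ := exists_norm_riemannZeta₀_le h0 h1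
  obtain ⟨C, hC, hz⟩ := exists_norm_riemannZeta_le h0 h1
  obtain ⟨D, hD, hd⟩ := exists_norm_deriv_riemannZeta_le h0 h1
  set K := 1 + 2 * C₀ with hK
  have hK0 : 0 < K := by positivity
  set c₁ := 1 / (2 * K ^ 3 * C) with hc₁
  have hc₁0 : 0 < c₁ := by positivity
  -- small enough that moving by `2η` changes `ζ` by at most half of its lower bound
  set c := min (θ / 8) (c₁ / (4 * D) ^ 4) with hc
  have hc0 : 0 < c := by positivity
  have hcθ : c ≤ θ / 8 := min_le_left _ _
  have hcD : c * (4 * D) ^ 4 ≤ c₁ := by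
    rw [← le_div_iff₀ (by positivity)]; exact min_le_right _ _
  -- the region to the right of the line `Re s = 1`
  have main : ∀ s : ℂ, 2 ≤ |s.im| → 1 + c / (|s.im| ^ θ) ^ 5 ≤ s.re → s.re ≤ 2 →
      4 * D * c / (|s.im| ^ θ) ^ 4 ≤ ‖riemannZeta s‖ := by
    intro s him hs hs2
    set A := |s.im| ^ θ with hA
    have hA1 : 1 ≤ A := Real.one_le_rpow (by linarith) h0.le
    set x := s.re - 1 with hx
    have hx0 : 0 < x := by
      have : 0 < c / A ^ 5 := by positivity
      linarith
    have h341 := one_le_norm_riemannZeta_prod hx0 s.im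
    have e1 : (1 + x + I * s.im : ℂ) = s := by
      apply Complex.ext <;> simp [hx]
    have hzx : ‖riemannZeta (1 + x)‖ ≤ K / x := by
      have hx1 : (1 + x : ℂ) ≠ 1 := by
        simp [hx0.ne']
      have hn : ‖(1 + x : ℂ)‖ = 1 + x := by
        rw [← ofReal_one, ← ofReal_add, norm_real, Real.norm_of_nonneg (by linarith)]
      have hx2 : x ≤ 1 := by linarith
      have h2 : ‖riemannZeta₀ (1 + x)‖ ≤ C₀ * 2 := by
        refine (hz0 _ (by simp; linarith) hx1).trans ?_
        rw [hn]
        gcongr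
        calc (1 + x) ^ θ ≤ (2 * 1) ^ θ := by gcongr; linarith
          _ ≤ 2 * 1 ^ θ := mul_rpow_le_mul h0 h1 (by norm_num) (by norm_num)
          _ = 2 := by simp
      rw [riemannZeta_eq_inv_sub_add hx1]
      refine (norm_add_le _ _).trans ?_
      have h3 : ‖((1 + x : ℂ) - 1)⁻¹‖ = 1 / x := by
        simp [abs_of_pos hx0]
      rw [h3, hK, add_div]
      gcongr
      rw [le_div_iff₀ hx0]
      nlinarith
    have hz2 : ‖riemannZeta (1 + x + 2 * I * s.im)‖ ≤ 2 * C * A := by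
      have hi : (1 + x + 2 * I * s.im : ℂ).im = 2 * s.im := by simp
      have hr : (1 + x + 2 * I * s.im : ℂ).re = s.re := by simp [hx]
      have := hz (1 + x + 2 * I * s.im) (by rw [hr]; linarith) (by rw [hr]; linarith)
        (by rw [hi, abs_mul]; norm_num; linarith)
      rw [hi, abs_mul, abs_two] at this
      refine this.trans ?_
      have := mul_rpow_le_mul h0 h1 (m := 2) (by norm_num) (abs_nonneg s.im)
      nlinarith
    rw [e1] at h341
    set z := ‖riemannZeta s‖ with hzdef
    have h5 : 1 ≤ (K / x) ^ 3 * z ^ 4 * (2 * C * A) := by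
      refine h341.trans ?_
      gcongr
    have h6 : c₁ * x ^ 3 / A ≤ z ^ 4 := by
      rw [div_le_iff₀ (by positivity)]
      have e : (K / x) ^ 3 * z ^ 4 * (2 * C * A) = (z ^ 4 * A) / (c₁ * x ^ 3) * x ^ 3 / x ^ 3 := by
        rw [hc₁]; field_simp
      rw [e, mul_div_cancel_right₀ _ (by positivity), one_le_div (by positivity)] at h5
      exact h5
    have h7 : (4 * D * c / A ^ 4) ^ 4 ≤ z ^ 4 := by
      refine le_trans ?_ h6
      calc (4 * D * c / A ^ 4) ^ 4 = (c * (4 * D) ^ 4) * (c / A ^ 5) ^ 3 / A := by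
            field_simp
        _ ≤ c₁ * x ^ 3 / A := by
            gcongr
            linarith
    exact le_of_pow_le_pow_left₀ (by norm_num) (norm_nonneg _) h7
  refine ⟨c, 2 * D * c, hc0, hcθ, by positivity, fun s him hs hs2 ↦ ?_⟩
  set A := |s.im| ^ θ with hA
  have hA1 : 1 ≤ A := Real.one_le_rpow (by linarith) h0.le
  set η := c / A ^ 5 with hη
  have hη0 : 0 < η := by positivity
  have hηθ : η ≤ θ / 8 := (div_le_self hc0.le (one_le_pow₀ hA1)).trans hcθ
  by_cases hcase : 1 + η ≤ s.re
  · refine le_trans ?_ (main s him hcase hs2)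
    gcongr
    linarith
  · push Not at hcase
    set s' : ℂ := ⟨1 + η, s.im⟩ with hs'
    have hm := main s' him (le_refl _) (by simp only [hs']; linarith)
    have hset : Convex ℝ ({z : ℂ | 1 - θ / 4 ≤ z.re} ∩ {z : ℂ | z.re ≤ 2} ∩ {z : ℂ | z.im = s.im}) := by
      refine ((convex_halfSpace_re_ge _).inter (convex_halfSpace_re_le _)).inter ?_
      exact convex_hyperplane (f := Complex.im) ⟨by simp, by simp⟩ _
    have hdiff := hset.norm_image_sub_le_of_norm_deriv_le (f := riemannZeta) (C := D * A) (x := s) (y := s')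
      ?_ ?_ ?_ ?_
    · have hn : ‖s' - s‖ ≤ 2 * η := by
        have : s' - s = ((1 + η - s.re : ℝ) : ℂ) := by
          apply Complex.ext <;> simp [hs']
        rw [this, norm_real, Real.norm_of_nonneg (by linarith)]
        linarith
      have h8 : ‖riemannZeta s' - riemannZeta s‖ ≤ 2 * D * c / A ^ 4 := by
        refine hdiff.trans ?_
        calc D * A * ‖s' - s‖ ≤ D * A * (2 * η) := by gcongr
          _ = 2 * D * c / A ^ 4 := by rw [hη]; field_simp
      have h9 := norm_sub_norm_le (riemannZeta s') (riemannZeta s)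
      have h10 : 4 * D * c / A ^ 4 = 2 * D * c / A ^ 4 + 2 * D * c / A ^ 4 := by ring
      have h11 : 4 * D * c / A ^ 4 ≤ ‖riemannZeta s'‖ := hm
      linarith
    · rintro z ⟨-, hz3⟩
      refine differentiableAt_riemannZeta (ne_one_of_im ?_)
      rw [show z.im = s.im from hz3]; linarith
    · rintro z ⟨⟨hz1, hz2⟩, hz3⟩
      have hz3' : z.im = s.im := hz3
      have := hd z hz1 hz2 (by rw [hz3']; exact him)
      rwa [hz3'] at this
    · exact ⟨⟨by simp only [Set.mem_ofPred_eq]; linarith, hs2⟩, rfl⟩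
    · exact ⟨⟨by simp only [Set.mem_ofPred_eq, hs']; linarith, by simp only [Set.mem_ofPred_eq, hs']; linarith⟩, rfl⟩

/-! ### Derivatives of the logarithmic derivative -/

/-- The function `-ζ'/ζ - ζ`, extended holomorphically across its removable singularity at `1`. -/
noncomputable def G (s : ℂ) : ℂ := -(deriv riemannZeta₁ s / riemannZeta₁ s) - riemannZeta₀ s

lemma riemannZeta₁_ne_zero {s : ℂ} (hs : s ≠ 1) (h : riemannZeta s ≠ 0) : riemannZeta₁ s ≠ 0 := by
  rw [riemannZeta_eq_inv_sub_mul hs] at h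
  exact right_ne_zero_of_mul h

lemma G_eq {s : ℂ} (hs : s ≠ 1) (h : riemannZeta s ≠ 0) :
    G s = -(deriv riemannZeta s / riemannZeta s) - riemannZeta s := by
  have h1 := riemannZeta₁_ne_zero hs h
  have h2 : s - 1 ≠ 0 := sub_ne_zero.mpr hs
  have h3 : deriv riemannZeta s / riemannZeta s =
      deriv riemannZeta₁ s / riemannZeta₁ s - (s - 1)⁻¹ := by
    rw [deriv_riemannZeta_eq_neg_inv_sub_sq_mul_add hs, riemannZeta_eq_inv_sub_mul hs]
    field_simp
    ring
  rw [G, h3, riemannZeta_eq_inv_sub_add hs]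
  ring

lemma differentiableAt_G {s : ℂ} (h : riemannZeta₁ s ≠ 0) : DifferentiableAt ℂ G s := by
  have h1 : Differentiable ℂ (deriv riemannZeta₁) := differentiable_riemannZeta₁.deriv
  unfold G
  exact ((h1 s).div (differentiable_riemannZeta₁ s) h).neg.sub (differentiable_riemannZeta₀ s)

lemma riemannZeta₁_ne_zero_of_one_le_re {s : ℂ} (hs : 1 ≤ s.re) : riemannZeta₁ s ≠ 0 := by
  by_cases h : s = 1
  · simp [h]
  · exact riemannZeta₁_ne_zero h (riemannZeta_ne_zero_of_one_le_re hs)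

/-- Near the real axis the bound is compactness: `ζ` has no zeros with `Re s ≥ 1`. -/
lemma exists_norm_iteratedDeriv_G_le_of_abs_im_le (k : ℕ) :
    ∃ C : ℝ, ∀ s : ℂ, 1 ≤ s.re → s.re ≤ 3 / 2 → |s.im| ≤ 3 → ‖iteratedDeriv k G s‖ ≤ C := by
  have hopen : IsOpen {z | riemannZeta₁ z ≠ 0} :=
    isOpen_ne_fun differentiable_riemannZeta₁.continuous continuous_const
  have han : AnalyticOnNhd ℂ G {z | riemannZeta₁ z ≠ 0} :=
    DifferentiableOn.analyticOnNhd (fun z hz ↦ (differentiableAt_G hz).differentiableWithinAt) hopen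
  have hcont := (han.iterated_deriv k).continuousOn
  have hK : IsCompact (Set.Icc (1 : ℝ) (3 / 2) ×ℂ Set.Icc (-3 : ℝ) 3) :=
    isCompact_Icc.reProdIm isCompact_Icc
  obtain ⟨C, hC⟩ := hK.exists_bound_of_continuousOn (hcont.mono fun z hz ↦
    riemannZeta₁_ne_zero_of_one_le_re hz.1.1)
  refine ⟨C, fun s h1 h2 h3 ↦ ?_⟩
  rw [iteratedDeriv_eq_iterate]
  exact hC s ⟨⟨h1, h2⟩, abs_le.mp h3⟩

/-- Derivatives of `G` are `O(|t|^{1/2})` uniformly up to the line `Re s = 1`: `G` is bounded by a power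
`|t|^{5θ}` on discs of radius about `|t|^{-5θ}`, and Cauchy's estimate costs that radius `k` times. -/
theorem exists_norm_iteratedDeriv_G_le (k : ℕ) :
    ∃ C : ℝ, 0 < C ∧ ∀ s : ℂ, 1 < s.re → s.re ≤ 3 / 2 →
      ‖iteratedDeriv k G s‖ ≤ C * (1 + s.im ^ 2) ^ (1 / 4 : ℝ) := by
  -- chosen so that the total loss `5 (k + 1) θ` is `1 / 2`
  set θ : ℝ := 1 / (10 * (k + 1)) with hθ
  have h0 : 0 < θ := by positivity
  have h1 : θ < 1 := by
    rw [hθ, div_lt_one (by positivity)]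
    have : (0 : ℝ) ≤ k := k.cast_nonneg
    linarith
  obtain ⟨C₁, hC₁⟩ := exists_norm_iteratedDeriv_G_le_of_abs_im_le k
  obtain ⟨C, hC, hz⟩ := exists_norm_riemannZeta_le h0 h1
  obtain ⟨D, hD, hd⟩ := exists_norm_deriv_riemannZeta_le h0 h1
  obtain ⟨c, b, hc, hcθ, hb, hlow⟩ := exists_le_norm_riemannZeta h0 h1
  set M := D / b + C with hM
  set C₂ := k.factorial * M / c ^ k * 2 ^ (5 * (k + 1)) with hC₂
  have hC₂0 : 0 < C₂ := by positivity
  refine ⟨max C₁ C₂, lt_max_of_lt_right hC₂0, fun s hs hs2 ↦ ?_⟩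
  have hJ : 1 ≤ (1 + s.im ^ 2) ^ (1 / 4 : ℝ) := Real.one_le_rpow (by nlinarith) (by norm_num)
  by_cases him : |s.im| ≤ 3
  · refine (hC₁ s hs.le hs2 him).trans ((le_max_left C₁ C₂).trans ?_)
    exact le_mul_of_one_le_right (hC₂0.le.trans (le_max_right _ _)) hJ
  · push Not at him
    set A := |s.im| ^ θ with hA
    have hA1 : 1 ≤ A := Real.one_le_rpow (by linarith) h0.le
    set r := c / (2 * A) ^ 5 with hr
    have hr0 : 0 < r := by positivity
    have hrc : r ≤ c := div_le_self hc.le (one_le_pow₀ (by linarith))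
    have hball : ∀ z : ℂ, ‖z - s‖ ≤ r → riemannZeta z ≠ 0 ∧ z ≠ 1 ∧ ‖G z‖ ≤ M * (2 * A) ^ 5 := by
      intro z hzr
      obtain ⟨a1, a2, a3⟩ := sphere_bounds hzr
      rw [abs_le] at a1
      have i2 : 2 ≤ |z.im| := by linarith
      have i1 : z ≠ 1 := ne_one_of_im (by linarith)
      set B := |z.im| ^ θ with hB
      have hB1 : 1 ≤ B := Real.one_le_rpow (by linarith) h0.le
      have hBA : B ≤ 2 * A :=
        (Real.rpow_le_rpow (abs_nonneg _) (show |z.im| ≤ 2 * |s.im| by linarith) h0.le).trans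
          (mul_rpow_le_mul h0 h1 (by norm_num) (abs_nonneg _))
      have hre : 1 - c / B ^ 5 ≤ z.re := by
        have : r ≤ c / B ^ 5 := by rw [hr]; gcongr
        linarith
      have l1 := hlow z i2 hre (by linarith)
      have l0 : 0 < ‖riemannZeta z‖ := lt_of_lt_of_le (by positivity) l1
      have l2 := hd z (by linarith) (by linarith) i2
      have l3 := hz z (by linarith) (by linarith) (by linarith)
      have hne : riemannZeta z ≠ 0 := norm_pos_iff.mp l0
      refine ⟨hne, i1, ?_⟩
      rw [G_eq i1 hne]
      have l4 : ‖deriv riemannZeta z / riemannZeta z‖ ≤ D / b * B ^ 5 := by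
        rw [norm_div, div_le_iff₀ l0]
        calc ‖deriv riemannZeta z‖ ≤ D * B := l2
          _ = D / b * B ^ 5 * (b / B ^ 4) := by field_simp
          _ ≤ _ := by gcongr
      calc ‖-(deriv riemannZeta z / riemannZeta z) - riemannZeta z‖
          ≤ D / b * B ^ 5 + C * B := by
            refine (norm_sub_le _ _).trans ?_
            rw [norm_neg]
            exact add_le_add l4 l3
        _ ≤ D / b * B ^ 5 + C * B ^ 5 := by
            gcongr
            exact le_self_pow₀ hB1 (by norm_num)
        _ = M * B ^ 5 := by rw [hM]; ring
        _ ≤ M * (2 * A) ^ 5 := by gcongr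
    have hcauchy := Complex.norm_iteratedDeriv_le_of_forall_mem_sphere_norm_le (c := s) (R := r)
      (C := M * (2 * A) ^ 5) (f := G) k hr0 ?_ ?_
    · refine hcauchy.trans ?_
      have e : k.factorial * (M * (2 * A) ^ 5) / r ^ k = C₂ * A ^ (5 * (k + 1)) := by
        rw [hr, hC₂, div_pow, ← pow_mul]
        field_simp
        ring
      rw [e]
      have hAp : A ^ (5 * (k + 1)) ≤ (1 + s.im ^ 2) ^ (1 / 4 : ℝ) := by
        rw [hA, ← Real.rpow_natCast, ← Real.rpow_mul (abs_nonneg _)]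
        have : θ * ((5 * (k + 1) : ℕ) : ℝ) = 2 * (1 / 4) := by
          rw [hθ]; push_cast; field_simp; norm_num
        rw [this, Real.rpow_mul (abs_nonneg _)]
        refine Real.rpow_le_rpow (by positivity) ?_ (by norm_num)
        rw [Real.rpow_two, sq_abs]; linarith
      exact mul_le_mul (le_max_right _ _) hAp (by positivity) (hC₂0.le.trans (le_max_right _ _))
    · refine DifferentiableOn.diffContOnCl fun z hz ↦ ?_
      rw [closure_ball _ hr0.ne'] at hz
      obtain ⟨b1, b2, -⟩ := hball z (by simpa [dist_eq] using hz)
      exact (differentiableAt_G (riemannZeta₁_ne_zero b2 b1)).differentiableWithinAt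
    · intro z hz
      exact (hball z (by simpa [dist_eq] using hz.le)).2.2

open ArithmeticFunction LSeries

/-- The coefficients of the Dirichlet series `-ζ'/ζ - ζ`. -/
noncomputable def coeff (n : ℕ) : ℂ := (vonMangoldt n : ℂ) - 1

lemma coeff_eq : coeff = (fun n ↦ (vonMangoldt n : ℂ)) - 1 := by
  ext n; simp [coeff]

lemma lseriesSummable_coeff {s : ℂ} (hs : 1 < s.re) : LSeriesSummable coeff s := by
  rw [coeff_eq]
  exact (LSeriesSummable_vonMangoldt hs).sub (LSeriesSummable_one_iff.mpr hs)

lemma lseries_coeff {s : ℂ} (hs : 1 < s.re) : LSeries coeff s = G s := by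
  have h1 : s ≠ 1 := by rintro rfl; simp at hs
  rw [coeff_eq, LSeries_sub (LSeriesSummable_vonMangoldt hs) (LSeriesSummable_one_iff.mpr hs),
    LSeries_vonMangoldt_eq_deriv_riemannZeta_div hs, LSeries_one_eq_riemannZeta hs,
    G_eq h1 (riemannZeta_ne_zero_of_one_lt_re hs), neg_div]

lemma abscissa_coeff {s : ℂ} (hs : 1 < s.re) : abscissaOfAbsConv coeff < s.re := by
  refine lt_of_le_of_lt (b := ((1 : ℝ) : EReal)) ?_ (by exact_mod_cast hs)
  refine abscissaOfAbsConv_le_of_forall_lt_LSeriesSummable fun y hy ↦ lseriesSummable_coeff (by simpa using hy)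

lemma logMul_iterate (k n : ℕ) (f : ℕ → ℂ) : logMul^[k] f n = Complex.log n ^ k * f n := by
  induction k with
  | zero => simp
  | succ k ih => rw [Function.iterate_succ_apply', logMul, ih]; ring

lemma lseriesSummable_logMul {s : ℂ} (hs : 1 < s.re) (k : ℕ) : LSeriesSummable (logMul^[k] coeff) s := by
  refine LSeriesSummable_of_abscissaOfAbsConv_lt_re ?_
  rw [absicssaOfAbsConv_logPowMul]
  exact abscissa_coeff hs

lemma norm_lseries_logMul {s : ℂ} (hs : 1 < s.re) (k : ℕ) :
    ‖LSeries (logMul^[k] coeff) s‖ = ‖iteratedDeriv k G s‖ := by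
  have h := LSeries_iteratedDeriv k (abscissa_coeff hs)
  have h2 : LSeries coeff =ᶠ[𝓝 s] G := by
    filter_upwards [(isOpen_lt continuous_const continuous_re).mem_nhds hs] with z hz
      using lseries_coeff hz
  rw [← h2.iteratedDeriv_eq, h, norm_mul]
  simp

/-! ### A smoothed Perron formula -/

open MeasureTheory

/-- The Mellin transform of `u ↦ (1 - u)₊`, written as a difference of indicator functions. -/
lemma hasMellin_triangle {s : ℂ} (hs : 0 < s.re) :
    HasMellin (fun u : ℝ ↦ Set.indicator (Set.Ioc 0 1) (fun _ ↦ (1 : ℂ)) u -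
      Set.indicator (Set.Ioc 0 1) (fun u : ℝ ↦ (u : ℂ) ^ (1 : ℂ)) u) s (1 / (s * (s + 1))) := by
  have h1 := hasMellin_one_Ioc hs
  have h2 := hasMellin_cpow_Ioc (1 : ℂ) (s := s) (by simp; linarith)
  have h := hasMellin_sub h1.1 h2.1
  refine ⟨h.1, h.2.trans ?_⟩
  rw [h1.2, h2.2]
  have i1 : s ≠ 0 := by rintro rfl; simp at hs
  have i2 : s + 1 ≠ 0 := by
    intro h; have := congrArg re h; simp at this; linarith
  field_simp
  ring

lemma triangle_eq {u : ℝ} (hu : 0 < u) : Set.indicator (Set.Ioc 0 1) (fun _ ↦ (1 : ℂ)) u -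
      Set.indicator (Set.Ioc 0 1) (fun u : ℝ ↦ (u : ℂ) ^ (1 : ℂ)) u = ((max (1 - u) 0 : ℝ) : ℂ) := by
  by_cases h : u ≤ 1
  · have hm : u ∈ Set.Ioc (0 : ℝ) 1 := ⟨hu, h⟩
    rw [Set.indicator_of_mem hm, Set.indicator_of_mem hm, max_eq_left (by linarith)]
    simp
  · rw [Set.indicator_of_notMem (fun h' ↦ h h'.2), Set.indicator_of_notMem (fun h' ↦ h h'.2),
      max_eq_right (by linarith)]
    simp

/-- The Mellin kernel `1/(s(s+1))` on the line `Re s = σ`. -/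
noncomputable def kernel (σ y : ℝ) : ℂ := 1 / ((σ + y * I) * (σ + y * I + 1))

lemma norm_kernel_le {σ : ℝ} (hσ : 1 ≤ σ) (y : ℝ) : ‖kernel σ y‖ ≤ (1 + y ^ 2)⁻¹ := by
  have h : ∀ τ : ℝ, 1 ≤ τ → √(1 + y ^ 2) ≤ ‖(τ : ℂ) + y * I‖ := by
    intro τ hτ
    rw [Complex.norm_add_mul_I]
    exact Real.sqrt_le_sqrt (by nlinarith)
  have h1 := h σ hσ
  have h2 := h (σ + 1) (by linarith)
  have e : ((σ + 1 : ℝ) : ℂ) + y * I = σ + y * I + 1 := by push_cast; ring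
  rw [e] at h2
  rw [kernel, norm_div, norm_one, norm_mul, one_div]
  refine inv_anti₀ (by positivity) ?_
  calc 1 + y ^ 2 = √(1 + y ^ 2) * √(1 + y ^ 2) := (Real.mul_self_sqrt (by positivity)).symm
    _ ≤ _ := by gcongr

lemma ne_zero_of_one_le {σ : ℝ} (hσ : 1 ≤ σ) (y : ℝ) : (σ + y * I : ℂ) ≠ 0 := by
  intro h; have := congrArg re h; simp at this; linarith

lemma continuous_kernel {σ : ℝ} (hσ : 1 ≤ σ) : Continuous (kernel σ) := by
  refine Continuous.div₀ (by fun_prop) (by fun_prop) fun y ↦ mul_ne_zero (ne_zero_of_one_le hσ y) ?_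
  have := ne_zero_of_one_le (σ := σ + 1) (by linarith) y
  push_cast at this
  convert this using 1
  ring

lemma integrable_kernel {σ : ℝ} (hσ : 1 ≤ σ) : Integrable (kernel σ) :=
  integrable_inv_one_add_sq.mono' (continuous_kernel hσ).aestronglyMeasurable
    (ae_of_all _ (norm_kernel_le hσ))

/-- Mellin inversion for `(1 - u)₊`, a smoothed Perron formula. -/
lemma integral_cpow_mul_kernel {σ : ℝ} (hσ : 1 ≤ σ) {u : ℝ} (hu : 0 < u) :
    ∫ y : ℝ, (u : ℂ) ^ (-(σ + y * I : ℂ)) * kernel σ y = 2 * Real.pi * (max (1 - u) 0 : ℝ) := by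
  have hm : ∀ y : ℝ, mellin (fun u : ℝ ↦ Set.indicator (Set.Ioc 0 1) (fun _ ↦ (1 : ℂ)) u -
      Set.indicator (Set.Ioc 0 1) (fun u : ℝ ↦ (u : ℂ) ^ (1 : ℂ)) u) (σ + y * I) = kernel σ y :=
    fun y ↦ (hasMellin_triangle (by simp; linarith)).2
  have h := mellinInv_mellin_eq σ (fun u : ℝ ↦ Set.indicator (Set.Ioc 0 1) (fun _ ↦ (1 : ℂ)) u -
      Set.indicator (Set.Ioc 0 1) (fun u : ℝ ↦ (u : ℂ) ^ (1 : ℂ)) u) hu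
      (hasMellin_triangle (by simp; linarith)).1 ?_ ?_
  · rw [mellinInv] at h
    simp only [hm, triangle_eq hu, smul_eq_mul, real_smul] at h
    rw [← h]
    push_cast
    rw [← mul_assoc, mul_one_div_cancel, one_mul]
    exact mul_ne_zero two_ne_zero (by exact_mod_cast Real.pi_ne_zero)
  · rw [VerticalIntegrable]
    simpa only [hm] using integrable_kernel hσ
  · have : ContinuousAt (fun u : ℝ ↦ ((max (1 - u) 0 : ℝ) : ℂ)) u := by fun_prop
    refine this.congr ?_
    filter_upwards [lt_mem_nhds hu] with v hv using (triangle_eq hv).symm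

/-- The smoothed Perron formula for a Dirichlet series. The case split removes `n = 0`, which does not
contribute to the series. -/
lemma hasSum_perron {a : ℕ → ℂ} {σ : ℝ} (hσ : 1 ≤ σ) (ha : LSeriesSummable a σ) {N : ℕ}
    (hN : 1 ≤ N) :
    HasSum (fun n : ℕ ↦ if n = 0 then 0 else a n * (2 * Real.pi * (max (1 - n / N) 0 : ℝ)))
      (∫ y : ℝ, (N : ℂ) ^ (σ + y * I : ℂ) * kernel σ y * LSeries a (σ + y * I)) := by
  have hN0 : (0 : ℝ) < N := by exact_mod_cast hN
  have hnt : ∀ n (y : ℝ), ‖LSeries.term a (σ + y * I) n‖ = ‖LSeries.term a σ n‖ := by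
    intro n y
    rw [LSeries.norm_term_eq, LSeries.norm_term_eq]; simp
  have hnN : ∀ y : ℝ, ‖(N : ℂ) ^ (σ + y * I : ℂ)‖ = (N : ℝ) ^ σ := by
    intro y
    have := norm_cpow_eq_rpow_re_of_pos hN0 (σ + y * I)
    simpa using this
  set F : ℕ → ℝ → ℂ := fun n y ↦ (N : ℂ) ^ (σ + y * I : ℂ) * kernel σ y * LSeries.term a (σ + y * I) n
  have hFn : ∀ n y, ‖F n y‖ = (N : ℝ) ^ σ * ‖LSeries.term a σ n‖ * ‖kernel σ y‖ := by
    intro n y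
    simp only [F, norm_mul, hnt, hnN]; ring
  have hcN : Continuous fun y : ℝ ↦ (N : ℂ) ^ (σ + y * I : ℂ) :=
    Continuous.const_cpow (by fun_prop) (Or.inl (by exact_mod_cast hN0.ne'))
  have hct : ∀ n, Continuous fun y : ℝ ↦ LSeries.term a (σ + y * I) n := by
    intro n
    rcases eq_or_ne n 0 with rfl | hn
    · simp only [LSeries.term_zero]; fun_prop
    · simp only [LSeries.term_of_ne_zero hn]
      refine Continuous.div₀ (by fun_prop) (Continuous.const_cpow (by fun_prop) (Or.inl (by exact_mod_cast hn)))
        fun y ↦ ?_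
      exact fun h ↦ hn (by exact_mod_cast (cpow_eq_zero_iff _ _).mp h |>.1)
  have hFc : ∀ n, Continuous (F n) := fun n ↦ (hcN.mul (continuous_kernel hσ)).mul (hct n)
  have hFi : ∀ n, Integrable (F n) := fun n ↦
    ((integrable_kernel hσ).norm.const_mul _).mono' (hFc n).aestronglyMeasurable
      (ae_of_all _ fun y ↦ (hFn n y).le)
  have hS : Summable fun n ↦ ∫ y, ‖F n y‖ := by
    simp only [hFn, integral_const_mul]
    exact (ha.norm.mul_left _).mul_right _
  have h := hasSum_integral_of_summable_integral_norm hFi hS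
  have e : (∫ y : ℝ, ∑' n, F n y) = ∫ y : ℝ, (N : ℂ) ^ (σ + y * I : ℂ) * kernel σ y * LSeries a (σ + y * I) := by
    congr 1; ext y
    simp only [F, LSeries, tsum_mul_left]
  rw [e] at h
  refine Eq.mpr (congrArg (fun g ↦ HasSum g _) (funext fun n ↦ ?_)) h
  split_ifs with hn
  · simp [F, hn]
  · have hn0 : (0 : ℝ) < n := by exact_mod_cast Nat.pos_of_ne_zero hn
    rw [← integral_cpow_mul_kernel hσ (by positivity : 0 < (n : ℝ) / N), ← integral_const_mul]
    congr 1; ext y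
    simp only [F, LSeries.term_of_ne_zero hn]
    have : (((n : ℝ) / N : ℝ) : ℂ) ^ (-(σ + y * I : ℂ)) = (N : ℂ) ^ (σ + y * I : ℂ) / (n : ℂ) ^ (σ + y * I : ℂ) := by
      rw [ofReal_div, div_cpow_ofReal_nonneg hn0.le hN0.le, cpow_neg, cpow_neg]
      simp
      field_simp
    rw [this]
    ring

/-- A Dirichlet series of size `O(|t|^{1/2})` on a vertical line has small smoothed partial sums, because
`(1 + t²)^{1/4 - 1}` is integrable. -/
lemma norm_sum_le_of_lseries_le {a : ℕ → ℂ} {σ : ℝ} (hσ : 1 ≤ σ) (ha : LSeriesSummable a σ) {C : ℝ}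
    (hC : ∀ y : ℝ, ‖LSeries a (σ + y * I)‖ ≤ C * (1 + y ^ 2) ^ (1 / 4 : ℝ)) {N : ℕ} (hN : 1 ≤ N) :
    ‖∑ n ∈ Finset.Icc 1 N, a n * ((1 - n / N : ℝ) : ℂ)‖ ≤
      (N : ℝ) ^ σ * (C * ∫ y : ℝ, ((1 : ℝ) + ‖y‖ ^ 2) ^ (-(3 / 2) / 2 : ℝ)) := by
  have hN0 : (0 : ℝ) < N := by exact_mod_cast hN
  have h := hasSum_perron hσ ha hN
  have h2 : HasSum (fun n : ℕ ↦ if n = 0 then 0 else a n * (2 * Real.pi * (max (1 - n / N) 0 : ℝ)))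
      (2 * Real.pi * ∑ n ∈ Finset.Icc 1 N, a n * ((1 - n / N : ℝ) : ℂ)) := by
    rw [Finset.mul_sum]
    have e : ∑ n ∈ Finset.Icc 1 N, 2 * (Real.pi : ℂ) * (a n * ((1 - n / N : ℝ) : ℂ)) =
        ∑ n ∈ Finset.Icc 1 N, if n = 0 then 0 else a n * (2 * Real.pi * (max (1 - n / N) 0 : ℝ)) := by
      refine Finset.sum_congr rfl fun n hn ↦ ?_
      rw [Finset.mem_Icc] at hn
      rw [if_neg (by omega), max_eq_left]
      · ring
      · rw [sub_nonneg, div_le_one hN0]; exact_mod_cast hn.2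
    rw [e]
    refine hasSum_sum_of_ne_finset_zero ?_
    · intro n hn
      rw [Finset.mem_Icc] at hn
      split_ifs with h0
      · rfl
      · rw [max_eq_right]
        · simp
        · rw [sub_nonpos, one_le_div hN0]
          have : N < n := by by_contra; exact hn ⟨by omega, by omega⟩
          exact_mod_cast this.le
  have h3 := h2.unique h
  have hb : ‖∫ y : ℝ, (N : ℂ) ^ (σ + y * I : ℂ) * kernel σ y * LSeries a (σ + y * I)‖ ≤
      ∫ y : ℝ, (N : ℝ) ^ σ * C * ((1 : ℝ) + ‖y‖ ^ 2) ^ (-(3 / 2) / 2 : ℝ) := by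
    refine norm_integral_le_of_norm_le ((integrable_rpow_neg_one_add_norm_sq (by simp; norm_num)).const_mul _)
      (ae_of_all _ fun y ↦ ?_)
    have hnN : ‖(N : ℂ) ^ (σ + y * I : ℂ)‖ = (N : ℝ) ^ σ := by
      have := norm_cpow_eq_rpow_re_of_pos hN0 (σ + y * I)
      simpa using this
    rw [norm_mul, norm_mul, hnN]
    have hp : (0 : ℝ) < 1 + y ^ 2 := by positivity
    calc (N : ℝ) ^ σ * ‖kernel σ y‖ * ‖LSeries a (σ + y * I)‖
        ≤ (N : ℝ) ^ σ * (1 + y ^ 2)⁻¹ * (C * (1 + y ^ 2) ^ (1 / 4 : ℝ)) := by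
          gcongr
          · exact norm_kernel_le hσ y
          · exact hC y
      _ = _ := by
          rw [Real.norm_eq_abs, sq_abs, ← Real.rpow_neg_one (1 + y ^ 2)]
          have : (1 + y ^ 2) ^ (-(3 / 2) / 2 : ℝ) = (1 + y ^ 2) ^ (-1 : ℝ) * (1 + y ^ 2) ^ (1 / 4 : ℝ) := by
            rw [← Real.rpow_add hp]; norm_num
          rw [this]; ring
  rw [← h3, norm_mul, integral_const_mul] at hb
  have hpi : 1 ≤ ‖(2 * Real.pi : ℂ)‖ := by
    rw [norm_mul, Complex.norm_real, Complex.norm_two, Real.norm_of_nonneg Real.pi_pos.le]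
    linarith [Real.pi_gt_three]
  calc _ = 1 * ‖∑ n ∈ Finset.Icc 1 N, a n * ((1 - n / N : ℝ) : ℂ)‖ := (one_mul _).symm
    _ ≤ ‖(2 * Real.pi : ℂ)‖ * ‖∑ n ∈ Finset.Icc 1 N, a n * ((1 - n / N : ℝ) : ℂ)‖ := by gcongr
    _ ≤ _ := by rw [mul_assoc] at hb; exact hb

/-! ### Weighted sums of the von Mangoldt function -/

/-- The weighted partial sum `∑_{j ≤ n} (Λ(j) - 1) log^k j`. -/
noncomputable def psum (k n : ℕ) : ℝ :=
  ∑ j ∈ Finset.range (n + 1), (vonMangoldt j - 1) * Real.log j ^ k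

lemma sum_range_sum_range (a : ℕ → ℝ) (N : ℕ) :
    ∑ n ∈ Finset.range N, ∑ j ∈ Finset.range (n + 1), a j = ∑ j ∈ Finset.range N, a j * (N - j) := by
  induction N with
  | zero => simp
  | succ N ih =>
    rw [Finset.sum_range_succ, ih, Finset.sum_range_succ, Finset.sum_range_succ, ← add_assoc,
      ← Finset.sum_add_distrib]
    push_cast
    congr 1
    · exact Finset.sum_congr rfl fun j _ ↦ by ring
    · ring

/-- The Perron bound on the line `Re s = σ`, in the limit `σ → 1⁺`. -/
theorem exists_abs_sum_psum_le {k : ℕ} (hk : k ≠ 0) :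
    ∃ C > 0, ∀ N : ℕ, |∑ n ∈ Finset.range N, psum k n| ≤ C * (N : ℝ) ^ 2 := by
  obtain ⟨C, hC, h⟩ := exists_norm_iteratedDeriv_G_le k
  set J := ∫ y : ℝ, ((1 : ℝ) + ‖y‖ ^ 2) ^ (-(3 / 2) / 2 : ℝ)
  have hJ : 0 ≤ J := integral_nonneg fun y ↦ by positivity
  refine ⟨C * J + 1, by positivity, fun N ↦ ?_⟩
  rcases Nat.eq_zero_or_pos N with rfl | hN
  · simp
  have hN0 : (0 : ℝ) < N := by exact_mod_cast hN
  have hb : ∀ σ : ℝ, 1 < σ → σ ≤ 3 / 2 →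
      ‖∑ n ∈ Finset.Icc 1 N, (logMul^[k] coeff) n * ((1 - n / N : ℝ) : ℂ)‖ ≤ (N : ℝ) ^ σ * (C * J) := by
    intro σ h1 h2
    refine norm_sum_le_of_lseries_le h1.le (lseriesSummable_logMul (by simpa) k) (fun y ↦ ?_) hN
    rw [norm_lseries_logMul (by simpa) k]
    simpa using h (σ + y * I) (by simpa) (by simpa)
  have hlim : Tendsto (fun σ : ℝ ↦ (N : ℝ) ^ σ * (C * J)) (𝓝[>] 1) (𝓝 ((N : ℝ) ^ (1 : ℝ) * (C * J))) :=
    ((Real.continuousAt_const_rpow hN0.ne').mul_const _).tendsto.mono_left nhdsWithin_le_nhds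
  have hle := ge_of_tendsto hlim (by
    filter_upwards [Ioc_mem_nhdsGT (by norm_num : (1 : ℝ) < 3 / 2)] with σ hσ using hb σ hσ.1 hσ.2)
  rw [Real.rpow_one] at hle
  have e : ((∑ n ∈ Finset.range N, psum k n : ℝ) : ℂ) =
      N * ∑ n ∈ Finset.Icc 1 N, (logMul^[k] coeff) n * ((1 - n / N : ℝ) : ℂ) := by
    simp only [psum]
    rw [sum_range_sum_range, Finset.mul_sum]
    have e1 : ∑ j ∈ Finset.range N, (vonMangoldt j - 1) * Real.log j ^ k * ((N : ℝ) - j) =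
        ∑ j ∈ Finset.Icc 1 N, (vonMangoldt j - 1) * Real.log j ^ k * ((N : ℝ) - j) := by
      have e2 : ∑ j ∈ Finset.range N, (vonMangoldt j - 1) * Real.log j ^ k * ((N : ℝ) - j) =
          ∑ j ∈ Finset.range (N + 1), (vonMangoldt j - 1) * Real.log j ^ k * ((N : ℝ) - j) := by
        rw [Finset.sum_range_succ]; simp
      rw [e2]
      symm
      refine Finset.sum_subset (fun j hj ↦ ?_) fun j hj hj' ↦ ?_
      · rw [Finset.mem_Icc] at hj
        exact Finset.mem_range.mpr (by omega)
      rw [Finset.mem_range] at hj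
      rw [Finset.mem_Icc] at hj'
      have : j = 0 := by omega
      simp [this, hk]
    rw [e1]
    push_cast
    refine Finset.sum_congr rfl fun j hj ↦ ?_
    rw [logMul_iterate, coeff, ← ofReal_natCast j, ← ofReal_log (by positivity)]
    have : (N : ℂ) ≠ 0 := by exact_mod_cast hN0.ne'
    field_simp
  have e3 := congrArg norm e
  rw [Complex.norm_real, Real.norm_eq_abs, norm_mul, Complex.norm_natCast] at e3
  rw [e3]
  calc _ ≤ (N : ℝ) * (N * (C * J)) := by gcongr
    _ ≤ _ := by nlinarith

/-- A sequence that cannot decrease quickly is controlled by its running sums. -/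
lemma abs_le_of_abs_sum_le {P : ℕ → ℝ} {B L : ℝ} {N H : ℕ} (hH : 1 ≤ H) (hHN : H ≤ N)
    (hstep : ∀ j < 2 * N, P j - L ≤ P (j + 1)) (hL : 0 ≤ L)
    (hQ : ∀ M ≤ 2 * N, |∑ n ∈ Finset.range M, P n| ≤ B) :
    |P N| ≤ 2 * B / H + H * L := by
  have hH0 : (0 : ℝ) < H := by exact_mod_cast hH
  have hmono : ∀ d j, j + d ≤ 2 * N → P j - d * L ≤ P (j + d) := by
    intro d
    induction d with
    | zero => intro j _; simp
    | succ d ih =>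
      intro j hj
      have h1 := ih j (by omega)
      have h2 := hstep (j + d) (by omega)
      push_cast
      rw [← add_assoc]
      linarith
  have up : H * (P N - H * L) ≤ 2 * B := by
    have h1 := hQ (N + H) (by omega)
    have h2 := hQ N (by omega)
    rw [Finset.sum_range_add] at h1
    have h3 : ∑ _d ∈ Finset.range H, (P N - H * L) ≤ ∑ d ∈ Finset.range H, P (N + d) := by
      refine Finset.sum_le_sum fun d hd ↦ ?_
      rw [Finset.mem_range] at hd
      have h4 := hmono d N (by omega)
      have : (d : ℝ) * L ≤ H * L := by gcongr
      linarith
    rw [Finset.sum_const, Finset.card_range, nsmul_eq_mul] at h3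
    rw [abs_le] at h1 h2
    linarith [h1.2, h2.1]
  have low : -(2 * B) ≤ H * (P N + H * L) := by
    obtain ⟨m, rfl⟩ := Nat.exists_eq_add_of_le' hHN
    have h1 := hQ (m + H) (by omega)
    have h2 := hQ m (by omega)
    rw [Finset.sum_range_add] at h1
    have h3 : ∑ d ∈ Finset.range H, P (m + d) ≤ ∑ _d ∈ Finset.range H, (P (m + H) + H * L) := by
      refine Finset.sum_le_sum fun d hd ↦ ?_
      rw [Finset.mem_range] at hd
      have h4 := hmono (H - d) (m + d) (by omega)
      have e : m + d + (H - d) = m + H := by omega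
      rw [e] at h4
      have : ((H - d : ℕ) : ℝ) * L ≤ H * L := by
        gcongr
        exact Nat.sub_le _ _
      linarith
    rw [Finset.sum_const, Finset.card_range, nsmul_eq_mul] at h3
    rw [abs_le] at h1 h2
    linarith [h1.1, h2.2]
  have e : 2 * B / H + H * L = (2 * B + H * (H * L)) / H := by field_simp
  rw [e, abs_le, le_div_iff₀ hH0, neg_le, ← sub_nonneg]
  refine ⟨?_, by linarith⟩
  have : (2 * B + H * (H * L)) / H - -P N = (2 * B + H * (P N + H * L)) / H := by field_simp; ring
  rw [this]
  apply div_nonneg _ hH0.le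
  linarith

/-- Averaging over windows of length `H ≈ N / log³ N` balances the two errors `N² / H` and
`H log⁶ N`. -/
lemma exists_abs_psum_le : ∃ C > 0, ∀ᶠ N : ℕ in atTop, |psum 6 N| ≤ C * (N * Real.log N ^ 3) := by
  obtain ⟨C, hC, h⟩ := exists_abs_sum_psum_le (k := 6) (by norm_num)
  refine ⟨8 * C + 128, by positivity, ?_⟩
  have hlo : ∀ᶠ x : ℝ in atTop, Real.log x ^ 3 ≤ x := by
    have := (Real.isLittleO_pow_log_id_atTop (n := 3)).bound one_pos
    filter_upwards [this, eventually_ge_atTop 1] with x hx h1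
    have h2 := Real.log_nonneg h1
    simpa [abs_of_nonneg h2, abs_of_nonneg (by linarith : 0 ≤ x)] using hx
  filter_upwards [tendsto_natCast_atTop_atTop.eventually hlo, eventually_ge_atTop 3] with N hN3 hN
  have hNr : (3 : ℝ) ≤ N := by exact_mod_cast hN
  set l := Real.log N
  have hl : 1 ≤ l := by
    rw [Real.le_log_iff_exp_le (by linarith)]
    linarith [Real.exp_one_lt_d9]
  set H := ⌈(N : ℝ) / l ^ 3⌉₊
  have hpos : 0 < (N : ℝ) / l ^ 3 := by positivity
  have hH1 : (N : ℝ) / l ^ 3 ≤ H := Nat.le_ceil _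
  have hH2 : (H : ℝ) ≤ 2 * (N / l ^ 3) := by
    have := Nat.ceil_lt_add_one hpos.le
    have : 1 ≤ (N : ℝ) / l ^ 3 := by rw [one_le_div (by positivity)]; exact hN3
    linarith
  have hHN : H ≤ N := Nat.ceil_le.mpr (div_le_self (by positivity) (one_le_pow₀ hl))
  have hl2 : Real.log (2 * N) ≤ 2 * l := by
    rw [Real.log_mul (by norm_num) (by positivity)]
    have : Real.log 2 ≤ l := Real.log_le_log (by norm_num) (by linarith)
    linarith
  have := abs_le_of_abs_sum_le (P := psum 6) (B := 4 * C * N ^ 2) (L := (2 * l) ^ 6) (N := N) (H := H)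
    (Nat.ceil_pos.mpr hpos) hHN ?_ (by positivity) ?_
  · refine this.trans ?_
    have a1 : 2 * (4 * C * (N : ℝ) ^ 2) / H ≤ 8 * C * (N * l ^ 3) := by
      rw [div_le_iff₀ (lt_of_lt_of_le hpos hH1)]
      calc 2 * (4 * C * (N : ℝ) ^ 2) = 8 * C * (N * l ^ 3) * (N / l ^ 3) := by field_simp; ring
        _ ≤ _ := by gcongr
    have a2 : H * (2 * l) ^ 6 ≤ 128 * (N * l ^ 3) := by
      calc H * (2 * l) ^ 6 ≤ 2 * (N / l ^ 3) * (2 * l) ^ 6 := by gcongr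
        _ = _ := by field_simp; ring
    linarith
  · intro j hj
    have e : psum 6 (j + 1) = psum 6 j + (vonMangoldt (j + 1) - 1) * Real.log ((j + 1 : ℕ) : ℝ) ^ 6 := by
      rw [psum, Finset.sum_range_succ, ← psum]
    have h0 : 0 ≤ Real.log ((j + 1 : ℕ) : ℝ) := Real.log_natCast_nonneg _
    have h1 : Real.log ((j + 1 : ℕ) : ℝ) ≤ 2 * l := by
      refine le_trans (Real.log_le_log (by positivity) ?_) hl2
      exact_mod_cast hj
    have h2 : Real.log ((j + 1 : ℕ) : ℝ) ^ 6 ≤ (2 * l) ^ 6 := by gcongr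
    have h3 : 0 ≤ vonMangoldt (j + 1) := vonMangoldt_nonneg
    have h4 : 0 ≤ vonMangoldt (j + 1) * Real.log ((j + 1 : ℕ) : ℝ) ^ 6 := by positivity
    rw [e]
    linarith
  · intro M hM
    refine (h M).trans ?_
    have : (M : ℝ) ≤ 2 * N := by exact_mod_cast hM
    calc C * (M : ℝ) ^ 2 ≤ C * (2 * N) ^ 2 := by gcongr
      _ = _ := by ring

/-! ### Mertens' second theorem with error term -/

/-- The analogue of `psum 6` in which `Λ` is restricted to the primes. -/
noncomputable def primePsum (n : ℕ) : ℝ :=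
  ∑ j ∈ Finset.range (n + 1), ((if j.Prime then Real.log j else 0) - 1) * Real.log j ^ 6

/-- Prime powers contribute `O(√N log⁶ N)`. -/
lemma exists_abs_primePsum_le :
    ∃ C > 0, ∀ᶠ N : ℕ in atTop, |primePsum N| ≤ C * (N * Real.log N ^ 3) := by
  obtain ⟨C, hC, h⟩ := exists_abs_psum_le
  obtain ⟨D, hD⟩ := Chebyshev.psi_sub_theta_le_mul_sqrt
  refine ⟨C + |D|, by positivity, ?_⟩
  have hlo : ∀ᶠ x : ℝ in atTop, Real.log x ^ 3 ≤ √x := by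
    have := (Real.isLittleO_pow_log_id_atTop (n := 6)).bound one_pos
    filter_upwards [this, eventually_ge_atTop 1] with x hx h1
    have h2 := Real.log_nonneg h1
    refine Real.le_sqrt_of_sq_le ?_
    rw [← pow_mul]
    simpa [abs_of_nonneg h2, abs_of_nonneg (by linarith : 0 ≤ x)] using hx
  filter_upwards [tendsto_natCast_atTop_atTop.eventually hlo, h] with N hN3 hN
  have hl : 0 ≤ Real.log N := Real.log_natCast_nonneg _
  have e : psum 6 N - primePsum N =
      ∑ j ∈ Finset.Ioc 0 N with ¬ j.Prime, vonMangoldt j * Real.log j ^ 6 := by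
    rw [psum, primePsum, ← Finset.sum_sub_distrib, Finset.sum_filter]
    symm
    have e1 : ∀ j : ℕ, (vonMangoldt j - 1) * Real.log j ^ 6 -
        ((if j.Prime then Real.log j else 0) - 1) * Real.log j ^ 6 =
        if ¬ j.Prime then vonMangoldt j * Real.log j ^ 6 else 0 := by
      intro j
      by_cases hj : j.Prime
      · simp [hj, vonMangoldt_apply_prime hj]
      · simp [hj]; ring
    simp only [e1]
    refine Finset.sum_subset (fun j hj ↦ ?_) fun j hj hj' ↦ ?_
    · rw [Finset.mem_Ioc] at hj
      exact Finset.mem_range.mpr (by omega)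
    · rw [Finset.mem_range] at hj
      rw [Finset.mem_Ioc] at hj'
      have : j = 0 := by omega
      simp [this]
  have h0 : 0 ≤ psum 6 N - primePsum N := by
    rw [e]
    exact Finset.sum_nonneg fun j _ ↦ mul_nonneg vonMangoldt_nonneg
      (pow_nonneg (Real.log_natCast_nonneg _) _)
  have h1 : psum 6 N - primePsum N ≤ |D| * (N * Real.log N ^ 3) := by
    calc psum 6 N - primePsum N
        ≤ ∑ j ∈ Finset.Ioc 0 N with ¬ j.Prime, vonMangoldt j * Real.log N ^ 6 := by
          rw [e]
          refine Finset.sum_le_sum fun j hj ↦ ?_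
          simp only [Finset.mem_filter, Finset.mem_Ioc] at hj
          have h2 : Real.log j ≤ Real.log N :=
            Real.log_le_log (by exact_mod_cast hj.1.1) (by exact_mod_cast hj.1.2)
          have h3 : 0 ≤ Real.log j := Real.log_natCast_nonneg _
          have h4 : 0 ≤ vonMangoldt j := vonMangoldt_nonneg
          gcongr
      _ = (Chebyshev.psi N - Chebyshev.theta N) * Real.log N ^ 6 := by
          rw [Chebyshev.psi_sub_theta_eq_sum_not_prime, Nat.floor_natCast, Finset.sum_mul]
      _ ≤ (|D| * √N) * Real.log N ^ 6 := by
          gcongr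
          exact (hD N).trans (by gcongr; exact le_abs_self D)
      _ = |D| * (√N * Real.log N ^ 3 * Real.log N ^ 3) := by ring
      _ ≤ |D| * (√N * √N * Real.log N ^ 3) := by gcongr
      _ = _ := by rw [Real.mul_self_sqrt (by positivity)]
  rw [abs_le] at hN ⊢
  constructor <;> linarith [hN.1, hN.2]

/-- The partial sum `∑_{p ≤ n} 1/p`. -/
noncomputable def primeRecip (n : ℕ) : ℝ :=
  ∑ p ∈ (Finset.range (n + 1)).filter Nat.Prime, 1 / (p : ℝ)

/-- The weight `1/(n log⁷ n)` used in the summation by parts. -/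
noncomputable def weight (n : ℕ) : ℝ := 1 / (n * Real.log n ^ 7)

/-- The comparison underlying the summation by parts: `1/p` is `log⁷ p` times the weight at `p`. -/
lemma primeRecip_succ (n : ℕ) (hn : 1 ≤ n) :
    primeRecip (n + 1) - primeRecip n =
      (primePsum (n + 1) - primePsum n) * weight (n + 1) +
        1 / ((n + 1 : ℕ) * Real.log (n + 1 : ℕ)) := by
  have hl : 0 < Real.log (n + 1 : ℕ) := Real.log_pos (by exact_mod_cast (by omega : 1 < n + 1))
  have hn : (0 : ℝ) < (n + 1 : ℕ) := by positivity
  simp only [primeRecip, primePsum, weight, Finset.sum_filter]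
  rw [Finset.sum_range_succ _ (n + 1), Finset.sum_range_succ _ (n + 1)]
  generalize ((n + 1 : ℕ) : ℝ) = y at *
  split_ifs
  · field_simp; ring
  · field_simp; ring

lemma log_succ_sub {n : ℕ} (hn : 1 ≤ n) :
    Real.log (n + 1 : ℕ) - Real.log n ≤ 1 / n ∧
      1 / ((n + 1 : ℕ) : ℝ) ≤ Real.log (n + 1 : ℕ) - Real.log n := by
  have hn0 : (0 : ℝ) < n := by exact_mod_cast hn
  have hn1 : (0 : ℝ) < (n + 1 : ℕ) := by positivity
  constructor
  · rw [← Real.log_div hn1.ne' hn0.ne']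
    refine (Real.log_le_sub_one_of_pos (by positivity)).trans (le_of_eq ?_)
    push_cast; field_simp; ring
  · rw [← neg_sub, ← Real.log_div hn0.ne' hn1.ne', le_neg]
    refine (Real.log_le_sub_one_of_pos (by positivity)).trans (le_of_eq ?_)
    push_cast; field_simp; ring

lemma one_le_log {n : ℕ} (hn : 3 ≤ n) : 1 ≤ Real.log n := by
  have hNr : (3 : ℝ) ≤ n := by exact_mod_cast hn
  rw [Real.le_log_iff_exp_le (by linarith)]
  linarith [Real.exp_one_lt_d9]

/-- The sum of `1/(n log n)` is compared with `log log n` through a telescoping error. -/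
lemma loglog_succ_sub {n : ℕ} (hn : 3 ≤ n) :
    |1 / ((n + 1 : ℕ) * Real.log (n + 1 : ℕ)) -
      (Real.log (Real.log (n + 1 : ℕ)) - Real.log (Real.log n))| ≤
      1 / (n * Real.log n) - 1 / ((n + 1 : ℕ) * Real.log (n + 1 : ℕ)) := by
  obtain ⟨h1, h2⟩ := log_succ_sub (by omega : 1 ≤ n)
  have l1 := one_le_log hn
  have l2 := one_le_log (by omega : 3 ≤ n + 1)
  have hn0 : (0 : ℝ) < n := by exact_mod_cast (by omega : 0 < n)
  have hn1 : (0 : ℝ) < (n + 1 : ℕ) := by positivity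
  generalize Real.log (n + 1 : ℕ) = b at *
  generalize Real.log n = a at *
  generalize ((n + 1 : ℕ) : ℝ) = m at *
  have u : Real.log b - Real.log a ≤ 1 / (n * a) := by
    rw [← Real.log_div (by linarith) (by linarith)]
    refine (Real.log_le_sub_one_of_pos (by positivity)).trans ?_
    have : b / a - 1 = (b - a) * (1 / a) := by field_simp
    rw [this]
    calc (b - a) * (1 / a) ≤ 1 / n * (1 / a) := by gcongr
      _ = _ := by field_simp
  have v : 1 / (m * b) ≤ Real.log b - Real.log a := by
    rw [← neg_sub, ← Real.log_div (by linarith) (by linarith), le_neg]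
    refine (Real.log_le_sub_one_of_pos (by positivity)).trans ?_
    have : a / b - 1 = -((b - a) * (1 / b)) := by field_simp; ring
    rw [this, neg_le_neg_iff]
    calc 1 / (m * b) = 1 / m * (1 / b) := by field_simp
      _ ≤ (b - a) * (1 / b) := by gcongr
  rw [abs_le]
  constructor <;> linarith

/-- The error from `primePsum` in the summation by parts also telescopes, with total `O(1/log³ n)`. -/
lemma mul_weight_sub_le {n : ℕ} (hn : 3 ≤ n) :
    n * Real.log n ^ 3 * (weight n - weight (n + 1)) ≤
      22 * (1 / Real.log n ^ 3 - 1 / Real.log (n + 1 : ℕ) ^ 3) ∧ 0 ≤ weight n - weight (n + 1) := by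
  obtain ⟨h1, h2⟩ := log_succ_sub (by omega : 1 ≤ n)
  have l1 := one_le_log hn
  have l2 := one_le_log (by omega : 3 ≤ n + 1)
  have hn0 : (1 : ℝ) ≤ n := by exact_mod_cast (by omega : 1 ≤ n)
  have hm : ((n + 1 : ℕ) : ℝ) = n + 1 := by push_cast; ring
  rw [weight, weight]
  rw [hm] at h1 h2 l2 ⊢
  generalize Real.log ((n : ℝ) + 1) = b at *
  generalize Real.log n = a at *
  generalize (n : ℝ) = m at *
  have hab : a ≤ b := by
    have : 0 ≤ 1 / (m + 1) := by positivity
    linarith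
  have hb2 : b ≤ 2 * a := by
    have : 1 / m ≤ 1 := by rw [div_le_one (by linarith)]; exact hn0
    linarith
  have h7 : m * (b ^ 7 - a ^ 7) ≤ 7 * b ^ 6 := by
    have e : b ^ 7 - a ^ 7 = (b - a) * (b ^ 6 + b ^ 5 * a + b ^ 4 * a ^ 2 + b ^ 3 * a ^ 3 +
        b ^ 2 * a ^ 4 + b * a ^ 5 + a ^ 6) := by ring
    have i : b ^ 6 + b ^ 5 * a + b ^ 4 * a ^ 2 + b ^ 3 * a ^ 3 + b ^ 2 * a ^ 4 + b * a ^ 5 + a ^ 6 ≤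
        b ^ 6 + b ^ 5 * b + b ^ 4 * b ^ 2 + b ^ 3 * b ^ 3 + b ^ 2 * b ^ 4 + b * b ^ 5 + b ^ 6 := by
      gcongr
    rw [e]
    calc m * ((b - a) * _) ≤ m * (1 / m * (b ^ 6 + b ^ 5 * b + b ^ 4 * b ^ 2 + b ^ 3 * b ^ 3 +
          b ^ 2 * b ^ 4 + b * b ^ 5 + b ^ 6)) := by
            have : 0 ≤ b - a := by linarith
            gcongr
      _ = _ := by field_simp; ring
  have h7' : 0 ≤ b ^ 7 - a ^ 7 := by rw [sub_nonneg]; gcongr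
  have h3 : 3 * a ^ 2 * (1 / (m + 1)) ≤ b ^ 3 - a ^ 3 := by
    have e : b ^ 3 - a ^ 3 = (b ^ 2 + b * a + a ^ 2) * (b - a) := by ring
    rw [e]
    have : 3 * a ^ 2 ≤ b ^ 2 + b * a + a ^ 2 := by nlinarith
    gcongr
  have e0 : 1 / (m * a ^ 7) - 1 / ((m + 1) * b ^ 7) =
      (b ^ 7 + m * (b ^ 7 - a ^ 7)) / (m * (m + 1) * a ^ 7 * b ^ 7) := by
    field_simp; ring
  constructor
  · have up : m * a ^ 3 * (1 / (m * a ^ 7) - 1 / ((m + 1) * b ^ 7)) ≤ 8 / ((m + 1) * a ^ 4) := by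
      rw [e0]
      have : b ^ 7 + m * (b ^ 7 - a ^ 7) ≤ 8 * b ^ 7 := by
        have : b ^ 6 ≤ b ^ 7 := pow_le_pow_right₀ l2 (by norm_num)
        linarith
      calc _ ≤ m * a ^ 3 * (8 * b ^ 7 / (m * (m + 1) * a ^ 7 * b ^ 7)) := by gcongr
        _ = _ := by field_simp
    refine up.trans ?_
    have e1 : 1 / a ^ 3 - 1 / b ^ 3 = (b ^ 3 - a ^ 3) / (a ^ 3 * b ^ 3) := by field_simp
    have hb3 : b ^ 3 ≤ 8 * a ^ 3 := by
      calc b ^ 3 ≤ (2 * a) ^ 3 := by gcongr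
        _ = _ := by ring
    calc 8 / ((m + 1) * a ^ 4) = 64 / 3 * (3 * a ^ 2 * (1 / (m + 1)) / (a ^ 3 * (8 * a ^ 3))) := by
          field_simp; norm_num
      _ ≤ 22 * ((b ^ 3 - a ^ 3) / (a ^ 3 * b ^ 3)) := by
          have : 0 ≤ b ^ 3 - a ^ 3 := by rw [sub_nonneg]; gcongr
          gcongr
          norm_num
      _ = _ := by rw [e1]
  · rw [e0]; positivity

/-- A sequence whose increments are dominated by those of a null sequence `g` converges at rate `g`. -/
lemma exists_abs_sub_le_of_abs_succ_sub_le {U g : ℕ → ℝ} (N₀ : ℕ)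
    (h : ∀ n ≥ N₀, |U (n + 1) - U n| ≤ g n - g (n + 1)) (hg : Tendsto g atTop (𝓝 0)) :
    ∃ c, ∀ n ≥ N₀, |U n - c| ≤ g n := by
  have hd : ∀ n ≥ N₀, ∀ d, |U (n + d) - U n| ≤ g n - g (n + d) := by
    intro n hn d
    induction d with
    | zero => simp
    | succ d ih =>
      have := h (n + d) (by omega)
      have h2 := abs_add_le (U (n + d + 1) - U (n + d)) (U (n + d) - U n)
      rw [← add_assoc]
      rw [sub_add_sub_cancel] at h2
      linarith
  have hanti : AntitoneOn g (Set.Ici N₀) := by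
    intro m hm n hn hmn
    obtain ⟨d, rfl⟩ := Nat.exists_eq_add_of_le hmn
    have := (abs_nonneg _).trans (hd m hm d)
    linarith
  have hpos : ∀ n ≥ N₀, 0 ≤ g n := by
    intro n hn
    refine le_of_tendsto' (hg.comp (tendsto_add_atTop_nat n)) fun d ↦ ?_
    exact hanti hn (by simp; omega) (by simp)
  have hc : CauchySeq fun n ↦ U (n + N₀) := by
    refine cauchySeq_of_le_tendsto_0 (fun n ↦ 2 * g (n + N₀)) (fun n m K hn hm ↦ ?_) ?_
    · obtain ⟨d, rfl⟩ := Nat.exists_eq_add_of_le hn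
      obtain ⟨e, rfl⟩ := Nat.exists_eq_add_of_le hm
      have h1 := hd (K + N₀) (by omega) d
      have h2 := hd (K + N₀) (by omega) e
      have h3 := hpos (K + N₀ + d) (by omega)
      have h4 := hpos (K + N₀ + e) (by omega)
      rw [show K + d + N₀ = K + N₀ + d by omega, show K + e + N₀ = K + N₀ + e by omega, Real.dist_eq]
      rw [abs_le] at *
      constructor <;> linarith [h1.1, h1.2, h2.1, h2.2]
    · simpa using ((hg.comp (tendsto_add_atTop_nat N₀)).const_mul 2)
  obtain ⟨c, hc⟩ := cauchySeq_tendsto_of_complete hc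
  refine ⟨c, fun n hn ↦ ?_⟩
  have hU : Tendsto (fun d ↦ U (n + d)) atTop (𝓝 c) := by
    have := hc.comp (tendsto_add_atTop_nat (n - N₀))
    refine this.congr fun d ↦ ?_
    simp only [Function.comp]
    congr 1; omega
  have := (hU.sub_const (U n)).abs
  rw [abs_sub_comm]
  refine le_of_tendsto' this fun d ↦ (hd n hn d).trans ?_
  linarith [hpos (n + d) (by omega)]

/-- Mertens' second theorem with an error term `O(1/log³ n)` and an unidentified constant. -/
theorem exists_abs_primeRecip_sub_le :
    ∃ c K : ℝ, 0 < K ∧ ∀ᶠ n : ℕ in atTop,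
      |primeRecip n - Real.log (Real.log n) - c| ≤ K / Real.log n ^ 3 := by
  obtain ⟨C, hC, h⟩ := exists_abs_primePsum_le
  obtain ⟨N₁, hN₁⟩ := eventually_atTop.mp h
  have hlogt : Tendsto (fun n : ℕ ↦ Real.log n) atTop atTop :=
    Real.tendsto_log_atTop.comp tendsto_natCast_atTop_atTop
  set g : ℕ → ℝ := fun n ↦ 22 * C * (1 / Real.log n ^ 3) + 1 / (n * Real.log n)
  have hg : Tendsto g atTop (𝓝 0) := by
    have h1 : Tendsto (fun n : ℕ ↦ 1 / Real.log n ^ 3) atTop (𝓝 0) := by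
      simp only [one_div]
      exact tendsto_inv_atTop_zero.comp ((tendsto_pow_atTop (by norm_num)).comp hlogt)
    have h2 : Tendsto (fun n : ℕ ↦ 1 / (n * Real.log n)) atTop (𝓝 0) := by
      simp only [one_div]
      exact tendsto_inv_atTop_zero.comp (tendsto_natCast_atTop_atTop.atTop_mul_atTop₀ hlogt)
    simpa [g] using (h1.const_mul (22 * C)).add h2
  set U : ℕ → ℝ := fun n ↦ primeRecip n - Real.log (Real.log n) - primePsum n * weight n with hU
  have key : ∀ n ≥ max N₁ 3, |U (n + 1) - U n| ≤ g n - g (n + 1) := by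
    intro n hn
    have hn3 := le_of_max_le_right hn
    have h2 := hN₁ n (le_of_max_le_left hn)
    obtain ⟨w1, w2⟩ := mul_weight_sub_le hn3
    have h3 := loglog_succ_sub hn3
    have h4 := primeRecip_succ n (by omega)
    have h5 : |primePsum n * (weight n - weight (n + 1))| ≤
        C * (22 * (1 / Real.log n ^ 3 - 1 / Real.log (n + 1 : ℕ) ^ 3)) := by
      rw [abs_mul, abs_of_nonneg w2]
      calc _ ≤ C * (n * Real.log n ^ 3) * (weight n - weight (n + 1)) := by gcongr
        _ = C * (n * Real.log n ^ 3 * (weight n - weight (n + 1))) := by ring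
        _ ≤ _ := by gcongr
    simp only [hU]
    have e : primeRecip (n + 1) - Real.log (Real.log (n + 1 : ℕ)) - primePsum (n + 1) * weight (n + 1) -
        (primeRecip n - Real.log (Real.log n) - primePsum n * weight n) =
        (1 / ((n + 1 : ℕ) * Real.log (n + 1 : ℕ)) -
      (Real.log (Real.log (n + 1 : ℕ)) - Real.log (Real.log n))) +
        primePsum n * (weight n - weight (n + 1)) := by linear_combination h4
    rw [e]
    refine (abs_add_le _ _).trans ?_
    simp only [g]
    linarith
  obtain ⟨c, hc⟩ := exists_abs_sub_le_of_abs_succ_sub_le (max N₁ 3) key hg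
  refine ⟨c, 22 * C + 1 + C, by positivity, ?_⟩
  have hlo : ∀ᶠ x : ℝ in atTop, Real.log x ^ 2 ≤ x := by
    have := (Real.isLittleO_pow_log_id_atTop (n := 2)).bound one_pos
    filter_upwards [this, eventually_ge_atTop 1] with x hx h1
    simpa [abs_of_nonneg (by linarith : 0 ≤ x)] using hx
  filter_upwards [tendsto_natCast_atTop_atTop.eventually hlo, eventually_ge_atTop (max N₁ 3)] with n hl hn
  have h1 := hc n hn
  have h2 := hN₁ n (le_of_max_le_left hn)
  have hn3 := le_of_max_le_right hn
  have l1 := one_le_log hn3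
  have hn0 : (1 : ℝ) ≤ n := by exact_mod_cast (by omega : 1 ≤ n)
  have hw : 0 ≤ weight n := by rw [weight]; positivity
  have h3 : |primePsum n * weight n| ≤ C * (1 / Real.log n ^ 3) := by
    rw [abs_mul, abs_of_nonneg hw]
    calc |primePsum n| * weight n ≤ C * (n * Real.log n ^ 3) * weight n := by gcongr
      _ = C * (1 / Real.log n ^ 4) := by rw [weight]; field_simp
      _ ≤ _ := by
        have := one_div_le_one_div_of_le (by positivity) (pow_le_pow_right₀ l1 (by norm_num : 3 ≤ 4))
        gcongr
  have h4 : 1 / (n * Real.log n) ≤ 1 / Real.log n ^ 3 := by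
    refine one_div_le_one_div_of_le (by positivity) ?_
    calc Real.log n ^ 3 = Real.log n ^ 2 * Real.log n := by ring
      _ ≤ _ := by gcongr
  have e : (22 * C + 1 + C) / Real.log n ^ 3 = 22 * C * (1 / Real.log n ^ 3) + 1 / Real.log n ^ 3 +
      C * (1 / Real.log n ^ 3) := by ring
  rw [e]
  simp only [g, hU] at h1
  rw [abs_le] at *
  constructor <;> linarith [h1.1, h1.2, h3.1, h3.2]

/-! ### The prime zeta function at one -/

/-- The higher-order part `-log(1 - x) - x` of the logarithm of an Euler factor. -/
noncomputable def logRem (x : ℝ) : ℝ := -Real.log (1 - x) - x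

lemma logRem_nonneg {x : ℝ} (hx : x < 1) : 0 ≤ logRem x := by
  have := Real.log_le_sub_one_of_pos (by linarith : 0 < 1 - x)
  rw [logRem]; linarith

lemma logRem_le {x : ℝ} (hx : x ≤ 1 / 2) : logRem x ≤ 2 * x ^ 2 := by
  have h := Real.one_sub_inv_le_log_of_pos (by linarith : 0 < 1 - x)
  have e : (1 - x)⁻¹ - 1 - x = x ^ 2 / (1 - x) := by
    have : 1 - x ≠ 0 := by linarith
    field_simp; ring
  have : x ^ 2 / (1 - x) ≤ 2 * x ^ 2 := by
    rw [div_le_iff₀ (by linarith)]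
    nlinarith [sq_nonneg x]
  rw [logRem]; linarith

/-- The constant `∑_p (-log(1 - 1/p) - 1/p)`. -/
noncomputable def logRemSum : ℝ := ∑' p : Nat.Primes, logRem ((p : ℝ) ^ (-1 : ℝ))

lemma prime_rpow_pos (p : Nat.Primes) (r : ℝ) : 0 < (p : ℝ) ^ r :=
  Real.rpow_pos_of_pos (by exact_mod_cast p.prop.pos) r

lemma prime_rpow_le {r : ℝ} (hr : r ≤ -1) (p : Nat.Primes) :
    (p : ℝ) ^ r ≤ (p : ℝ) ^ (-1 : ℝ) ∧ (p : ℝ) ^ (-1 : ℝ) ≤ 1 / 2 := by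
  have h2 : (2 : ℝ) ≤ p := by exact_mod_cast p.prop.two_le
  refine ⟨Real.rpow_le_rpow_of_exponent_le (by linarith) hr, ?_⟩
  rw [Real.rpow_neg_one, ← one_div]
  exact one_div_le_one_div_of_le two_pos h2

lemma logRem_prime_le {r : ℝ} (hr : r ≤ -1) (p : Nat.Primes) :
    0 ≤ logRem ((p : ℝ) ^ r) ∧ logRem ((p : ℝ) ^ r) ≤ 2 * (p : ℝ) ^ (-2 : ℝ) := by
  obtain ⟨h1, h2⟩ := prime_rpow_le hr p
  have h0 := prime_rpow_pos p r
  refine ⟨logRem_nonneg (by linarith), (logRem_le (by linarith)).trans ?_⟩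
  have : (p : ℝ) ^ (-2 : ℝ) = ((p : ℝ) ^ (-1 : ℝ)) ^ 2 := by
    rw [← Real.rpow_natCast, ← Real.rpow_mul (by positivity)]; norm_num
  rw [this]; gcongr

lemma summable_two_mul_prime_rpow : Summable fun p : Nat.Primes ↦ 2 * (p : ℝ) ^ (-2 : ℝ) :=
  (Nat.Primes.summable_rpow.mpr (by norm_num)).mul_left 2

lemma summable_logRem {r : ℝ} (hr : r ≤ -1) :
    Summable fun p : Nat.Primes ↦ logRem ((p : ℝ) ^ r) :=
  summable_two_mul_prime_rpow.of_nonneg_of_le (fun p ↦ (logRem_prime_le hr p).1)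
    fun p ↦ (logRem_prime_le hr p).2

lemma tendsto_tsum_logRem :
    Tendsto (fun s : ℝ ↦ ∑' p : Nat.Primes, logRem ((p : ℝ) ^ (-(1 + s)))) (𝓝[>] 0) (𝓝 logRemSum) := by
  refine tendsto_tsum_of_dominated_convergence summable_two_mul_prime_rpow (fun p ↦ ?_) ?_
  · have h1 := prime_rpow_le le_rfl p
    have hp : (0 : ℝ) < p := by exact_mod_cast p.prop.pos
    have hc : ContinuousAt (fun s : ℝ ↦ logRem ((p : ℝ) ^ (-(1 + s)))) 0 := by
      have h2 : ContinuousAt (fun s : ℝ ↦ (p : ℝ) ^ (-(1 + s))) 0 :=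
        (Real.continuous_const_rpow hp.ne').continuousAt.comp (by fun_prop)
      have h3 : 1 - (p : ℝ) ^ (-(1 + 0 : ℝ)) ≠ 0 := by
        rw [add_zero]; linarith [h1.2]
      unfold logRem
      exact ((continuousAt_const.sub h2).log h3).neg.sub h2
    have := hc.tendsto.mono_left (nhdsWithin_le_nhds (s := Set.Ioi 0))
    simpa using this
  · filter_upwards [self_mem_nhdsWithin] with s hs p
    have hs : 0 < s := hs
    obtain ⟨h1, h2⟩ := logRem_prime_le (by linarith : -(1 + s) ≤ -1) p
    rwa [Real.norm_of_nonneg h1]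

/-- The logarithm of the Euler product for real `s > 1`. -/
lemma exp_tsum_eq_zeta {s : ℝ} (hs : 0 < s) :
    ((Real.exp (∑' p : Nat.Primes, -Real.log (1 - (p : ℝ) ^ (-(1 + s)))) : ℝ) : ℂ) =
      riemannZeta (1 + s) := by
  rw [← riemannZeta_eulerProduct_exp_log (by simpa using hs), ofReal_exp, ofReal_tsum]
  congr 2
  ext p
  obtain ⟨h1, h2⟩ := prime_rpow_le (by linarith : -(1 + s) ≤ -1) p
  rw [ofReal_neg, ofReal_log (by linarith), ofReal_sub, ofReal_cpow (by positivity)]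
  push_cast
  rfl

/-- The behaviour of `∑_p p^{-1-s}` as `s → 0⁺`, from the Euler product and `s ζ(1 + s) → 1`. -/
lemma tendsto_tsum_prime :
    Tendsto (fun s : ℝ ↦ (∑' p : Nat.Primes, (p : ℝ) ^ (-(1 + s))) + Real.log s) (𝓝[>] 0)
      (𝓝 (-logRemSum)) := by
  have h1 : Tendsto (fun s : ℝ ↦
      s * Real.exp (∑' p : Nat.Primes, -Real.log (1 - (p : ℝ) ^ (-(1 + s))))) (𝓝[>] 0) (𝓝 1) := by
    have ht : Tendsto (fun s : ℝ ↦ (1 + s : ℂ)) (𝓝[>] 0) (𝓝[≠] 1) := by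
      refine tendsto_nhdsWithin_iff.mpr ⟨?_, ?_⟩
      · have : Continuous fun s : ℝ ↦ (1 + s : ℂ) := by fun_prop
        simpa using (this.tendsto 0).mono_left nhdsWithin_le_nhds
      · filter_upwards [self_mem_nhdsWithin] with s hs
        have : s ≠ 0 := (Set.mem_Ioi.mp hs).ne'
        simpa using this
    have h := riemannZeta_residue_one.comp ht
    have h' := (continuous_re.tendsto _).comp h
    rw [one_re] at h'
    refine h'.congr' ?_
    filter_upwards [self_mem_nhdsWithin] with s hs
    simp only [Function.comp]
    rw [← exp_tsum_eq_zeta hs, add_sub_cancel_left, ← ofReal_mul, ofReal_re]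
  have h2 := ((Real.continuousAt_log one_ne_zero).tendsto.comp h1).sub tendsto_tsum_logRem
  rw [Real.log_one, zero_sub] at h2
  refine h2.congr' ?_
  filter_upwards [self_mem_nhdsWithin] with s hs
  have hs : 0 < s := hs
  simp only [Function.comp]
  rw [Real.log_mul hs.ne' (Real.exp_ne_zero _), Real.log_exp]
  have h3 := summable_logRem (by linarith : -(1 + s) ≤ -1)
  have h4 : Summable fun p : Nat.Primes ↦ (p : ℝ) ^ (-(1 + s)) :=
    Nat.Primes.summable_rpow.mpr (by linarith)
  have h5 : ∑' p : Nat.Primes, -Real.log (1 - (p : ℝ) ^ (-(1 + s))) =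
      (∑' p : Nat.Primes, logRem ((p : ℝ) ^ (-(1 + s)))) + ∑' p : Nat.Primes, (p : ℝ) ^ (-(1 + s)) := by
    rw [← h3.tsum_add h4]
    congr 1; ext p; rw [logRem]; ring
  rw [h5]; ring

/-! ### The constant -/

lemma integrableOn_abs_log_mul_exp :
    IntegrableOn (fun y : ℝ ↦ |Real.log y| * Real.exp (-y)) (Set.Ioi 0) := by
  have h1 := (Real.GammaIntegral_convergent (s := 1 / 2) (by norm_num)).const_mul 2
  have h2 := Real.GammaIntegral_convergent (s := 2) (by norm_num)
  refine (h1.add h2).mono' (by fun_prop) ?_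
  refine (ae_restrict_iff' measurableSet_Ioi).mpr (ae_of_all _ fun y hy ↦ ?_)
  have hy : 0 < y := hy
  have hk : |Real.log y| ≤ 2 * y ^ (1 / 2 - 1 : ℝ) + y ^ (2 - 1 : ℝ) := by
    have p1 : 0 < y ^ (1 / 2 - 1 : ℝ) := Real.rpow_pos_of_pos hy _
    have p2 : y ^ (2 - 1 : ℝ) = y := by norm_num
    have h3 := Real.log_le_sub_one_of_pos hy
    have h4 := Real.log_le_sub_one_of_pos p1
    rw [Real.log_rpow hy] at h4
    rw [p2, abs_le]
    constructor <;> linarith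
  simp only [Pi.add_apply]
  rw [Real.norm_of_nonneg (by positivity)]
  calc _ ≤ (2 * y ^ (1 / 2 - 1 : ℝ) + y ^ (2 - 1 : ℝ)) * Real.exp (-y) := by gcongr
    _ = _ := by ring

/-- Euler's constant as `-Γ'(1)`, written as an integral. -/
lemma integral_log_mul_exp :
    ∫ y in Set.Ioi (0 : ℝ), Real.log y * Real.exp (-y) = -Real.eulerMascheroniConstant := by
  have h1 := hasDerivAt_GammaIntegral (s := 1) (by simp)
  have h2 : GammaIntegral =ᶠ[𝓝 1] Gamma := by
    filter_upwards [(isOpen_lt continuous_const continuous_re).mem_nhds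
      (by simp : (0 : ℝ) < (1 : ℂ).re)] with z hz using (Gamma_eq_integral hz).symm
  have h3 := (h2.hasDerivAt_iff.mp h1).unique Complex.hasDerivAt_Gamma_one
  have h4 : ∫ t : ℝ in Set.Ioi 0, (t : ℂ) ^ (1 - 1 : ℂ) * (Real.log t * Real.exp (-t)) =
      ((∫ y in Set.Ioi (0 : ℝ), Real.log y * Real.exp (-y) : ℝ) : ℂ) := by
    rw [← integral_complex_ofReal]
    simp
  rw [h4] at h3
  exact_mod_cast h3

/-- `∑_p p^{-1-s} = ∫₀^∞ e^{-y} ∑_{p ≤ e^{y/s}} 1/p dy`, a continuous form of partial summation. -/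
lemma tsum_prime_eq_integral {s : ℝ} (hs : 0 < s) :
    ∑' p : Nat.Primes, (p : ℝ) ^ (-(1 + s)) =
      ∫ y in Set.Ioi (0 : ℝ), primeRecip ⌊Real.exp (y / s)⌋₊ * Real.exp (-y) := by
  set F : Nat.Primes → ℝ → ℝ := fun p ↦ (Set.Ioi (s * Real.log p)).indicator
    (fun y ↦ 1 / (p : ℝ) * Real.exp (-y)) with hF
  have hlog : ∀ p : Nat.Primes, 0 < s * Real.log p := fun p ↦
    mul_pos hs (Real.log_pos (by exact_mod_cast p.prop.one_lt))
  have hpos : ∀ p : Nat.Primes, (0 : ℝ) < p := fun p ↦ by exact_mod_cast p.prop.pos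
  have hnn : ∀ p y, 0 ≤ F p y := fun p y ↦ Set.indicator_nonneg (fun y _ ↦ by positivity) y
  have hint : ∀ p, ∫ y in Set.Ioi (0 : ℝ), F p y = (p : ℝ) ^ (-(1 + s)) := by
    intro p
    simp only [hF]
    rw [setIntegral_indicator measurableSet_Ioi, Set.Ioi_inter_Ioi, sup_eq_right.mpr (hlog p).le,
      integral_const_mul, integral_exp_neg_Ioi, neg_add, Real.rpow_add (hpos p), Real.rpow_neg_one,
      Real.rpow_def_of_pos (hpos p)]
    ring_nf
  have hFi : ∀ p, Integrable (F p) (volume.restrict (Set.Ioi 0)) := fun p ↦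
    ((integrableOn_exp_neg_Ioi 0).const_mul _).indicator measurableSet_Ioi
  have h := hasSum_integral_of_summable_integral_norm hFi (by
    simp only [Real.norm_of_nonneg (hnn _ _), hint]
    exact Nat.Primes.summable_rpow.mpr (by linarith))
  simp only [hint] at h
  rw [h.tsum_eq]
  -- the two integrands agree except at the countably many points `y = s log p`
  have hae : ∀ᵐ y : ℝ, ∀ p : Nat.Primes, y ≠ s * Real.log p :=
    ae_all_iff.mpr fun p ↦ Measure.ae_ne volume _
  refine integral_congr_ae ((ae_restrict_of_ae hae).mono fun y hy ↦ ?_)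
  have hmem : ∀ p : Nat.Primes, y ∈ Set.Ioi (s * Real.log p) ↔ (p : ℕ) ≤ ⌊Real.exp (y / s)⌋₊ := by
    intro p
    rw [Nat.le_floor_iff (Real.exp_pos _).le, ← Real.log_le_iff_le_exp (hpos p), le_div_iff₀ hs,
      mul_comm _ s]
    exact ⟨fun h ↦ le_of_lt h, fun h ↦ lt_of_le_of_ne h (hy p).symm⟩
  simp only [primeRecip, Finset.sum_mul]
  have e : ∀ p : Nat.Primes, F p y = (fun n : ℕ ↦ if n ≤ ⌊Real.exp (y / s)⌋₊ then
      1 / (n : ℝ) * Real.exp (-y) else 0) p := by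
    intro p
    simp only [hF, Set.indicator_apply, hmem]
  simp only [e]
  rw [show (∑' p : Nat.Primes, if (p : ℕ) ≤ ⌊Real.exp (y / s)⌋₊ then
      1 / ((p : ℕ) : ℝ) * Real.exp (-y) else 0) = ∑' n : ℕ, Set.indicator {n : ℕ | n.Prime}
      (fun n : ℕ ↦ if n ≤ ⌊Real.exp (y / s)⌋₊ then 1 / (n : ℝ) * Real.exp (-y) else 0) n from
      tsum_subtype {n : ℕ | n.Prime} (fun n : ℕ ↦ if n ≤ ⌊Real.exp (y / s)⌋₊ then
        1 / (n : ℝ) * Real.exp (-y) else 0)]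
  rw [tsum_eq_sum (s := Finset.range (⌊Real.exp (y / s)⌋₊ + 1)), Finset.sum_filter]
  · refine Finset.sum_congr rfl fun n hn ↦ ?_
    have : n ≤ ⌊Real.exp (y / s)⌋₊ := by rw [Finset.mem_range] at hn; omega
    simp [Set.indicator_apply, this]
  · intro n hn
    have : ¬ n ≤ ⌊Real.exp (y / s)⌋₊ := by rw [Finset.mem_range] at hn; omega
    simp [this]

/-- The error in approximating `∑_{p ≤ e^v} 1/p` by `log v`. -/
noncomputable def recipErr (v : ℝ) : ℝ := primeRecip ⌊Real.exp v⌋₊ - Real.log v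

lemma primeRecip_nonneg (n : ℕ) : 0 ≤ primeRecip n := Finset.sum_nonneg fun p _ ↦ by positivity

lemma primeRecip_mono : Monotone primeRecip := fun m n h ↦
  Finset.sum_le_sum_of_subset_of_nonneg
    (Finset.filter_subset_filter _ (Finset.range_mono (by omega))) fun p _ _ ↦ by positivity

/-- Rounding `e^v` down to an integer does not affect `log log` in the limit. -/
lemma tendsto_loglog_floor :
    Tendsto (fun v : ℝ ↦ Real.log (Real.log ⌊Real.exp v⌋₊) - Real.log v) atTop (𝓝 0) := by
  have h1 : Tendsto (fun v : ℝ ↦ Real.log ⌊Real.exp v⌋₊ / v) atTop (𝓝 1) := by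
    have hl : Tendsto (fun v : ℝ ↦ 1 - 1 / v) atTop (𝓝 1) := by
      simpa using (tendsto_inv_atTop_zero (𝕜 := ℝ)).const_sub 1
    refine tendsto_of_tendsto_of_tendsto_of_le_of_le' hl tendsto_const_nhds ?_ ?_
    · filter_upwards [eventually_ge_atTop 1] with v hv
      have h2 : (1 : ℝ) ≤ Real.exp v := Real.one_le_exp (by linarith)
      have h3 : 1 ≤ ⌊Real.exp v⌋₊ := Nat.le_floor (by exact_mod_cast h2)
      have h4 := (log_succ_sub h3).1
      have h5 : v ≤ Real.log (⌊Real.exp v⌋₊ + 1 : ℕ) := by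
        rw [Real.le_log_iff_exp_le (by positivity)]
        push_cast
        exact (Nat.lt_floor_add_one _).le
      have h6 : 1 / ((⌊Real.exp v⌋₊ : ℕ) : ℝ) ≤ 1 := by
        rw [div_le_one (by positivity)]; exact_mod_cast h3
      rw [le_div_iff₀ (by linarith)]
      have : (1 - 1 / v) * v = v - 1 := by field_simp
      linarith
    · filter_upwards [eventually_ge_atTop 1] with v hv
      have h2 : (1 : ℝ) ≤ Real.exp v := Real.one_le_exp (by linarith)
      have h3 : 1 ≤ ⌊Real.exp v⌋₊ := Nat.le_floor (by exact_mod_cast h2)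
      rw [div_le_one (by linarith), Real.log_le_iff_le_exp (by positivity)]
      exact Nat.floor_le (by linarith)
  have h2 := (Real.continuousAt_log one_ne_zero).tendsto.comp h1
  rw [Real.log_one] at h2
  refine h2.congr' ?_
  filter_upwards [eventually_ge_atTop 2] with v hv
  have h3 : (2 : ℝ) ≤ Real.exp v := by linarith [Real.add_one_le_exp v]
  have h4 : 2 ≤ ⌊Real.exp v⌋₊ := Nat.le_floor (by exact_mod_cast h3)
  have h5 : 0 < Real.log ⌊Real.exp v⌋₊ := Real.log_pos (by exact_mod_cast h4)
  simp only [Function.comp]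
  rw [Real.log_div h5.ne' (by linarith)]

lemma tendsto_recipErr {c : ℝ}
    (hc : Tendsto (fun n : ℕ ↦ primeRecip n - Real.log (Real.log n)) atTop (𝓝 c)) :
    Tendsto recipErr atTop (𝓝 c) := by
  have h1 := hc.comp (tendsto_nat_floor_atTop.comp Real.tendsto_exp_atTop)
  have h2 := h1.add tendsto_loglog_floor
  rw [add_zero] at h2
  refine h2.congr fun v ↦ ?_
  simp only [Function.comp, recipErr]; ring

/-- The dominating function for the limit `s → 0⁺`; for small `y / s` the error is controlled by
`|log y|`. -/
lemma exists_abs_recipErr_le {c : ℝ} (h : Tendsto recipErr atTop (𝓝 c)) :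
    ∃ K ≥ 0, ∀ y s : ℝ, 0 < y → 0 < s → s < 1 → |recipErr (y / s)| ≤ K + |Real.log y| := by
  obtain ⟨v₀, hv₀⟩ := eventually_atTop.mp (h.abs.eventually_le_const (lt_add_one |c|))
  set w := max v₀ 1
  have hw : 0 ≤ Real.log w := Real.log_nonneg (le_max_right _ _)
  set K := |c| + 1 + primeRecip ⌊Real.exp w⌋₊ + Real.log w
  have hS := primeRecip_nonneg ⌊Real.exp w⌋₊
  refine ⟨K, by positivity, fun y s hy hs hs1 ↦ ?_⟩
  rcases le_total w (y / s) with hv | hv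
  · have := hv₀ (y / s) ((le_max_left _ _).trans hv)
    have := abs_nonneg (Real.log y)
    simp only [K]; linarith
  · have hyv : y ≤ y / s := by rw [le_div_iff₀ hs]; nlinarith
    have l1 : Real.log y ≤ Real.log (y / s) := Real.log_le_log hy hyv
    have l2 : Real.log (y / s) ≤ Real.log w := Real.log_le_log (by linarith) hv
    have l3 : primeRecip ⌊Real.exp (y / s)⌋₊ ≤ primeRecip ⌊Real.exp w⌋₊ :=
      primeRecip_mono (Nat.floor_mono (Real.exp_le_exp.mpr hv))
    have l4 := primeRecip_nonneg ⌊Real.exp (y / s)⌋₊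
    have l5 := neg_abs_le (Real.log y)
    have l6 := abs_nonneg (Real.log y)
    have l7 := abs_nonneg c
    rw [recipErr, abs_le]
    simp only [K]
    constructor <;> linarith

lemma measurable_recipErr : Measurable recipErr := by
  have h : Measurable primeRecip := measurable_from_nat
  have h2 : Measurable fun v : ℝ ↦ ⌊Real.exp v⌋₊ := Nat.measurable_floor.comp Real.measurable_exp
  exact (h.comp h2).sub Real.measurable_log

lemma tendsto_integral_recipErr {c : ℝ} (h : Tendsto recipErr atTop (𝓝 c)) :
    Tendsto (fun s : ℝ ↦ ∫ y in Set.Ioi (0 : ℝ), recipErr (y / s) * Real.exp (-y)) (𝓝[>] 0) (𝓝 c) ∧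
    ∀ s : ℝ, 0 < s → s < 1 → IntegrableOn (fun y ↦ recipErr (y / s) * Real.exp (-y)) (Set.Ioi 0) := by
  obtain ⟨K, hK, hb⟩ := exists_abs_recipErr_le h
  have hbi : IntegrableOn (fun y : ℝ ↦ K * Real.exp (-y) + |Real.log y| * Real.exp (-y)) (Set.Ioi 0) :=
    ((integrableOn_exp_neg_Ioi 0).const_mul K).add integrableOn_abs_log_mul_exp
  have hm : ∀ s : ℝ, AEStronglyMeasurable (fun y ↦ recipErr (y / s) * Real.exp (-y))
      (volume.restrict (Set.Ioi 0)) := fun s ↦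
    ((measurable_recipErr.comp (measurable_id.div_const s)).mul (by fun_prop)).aestronglyMeasurable
  have hle : ∀ s : ℝ, 0 < s → s < 1 → ∀ᵐ y ∂(volume.restrict (Set.Ioi (0 : ℝ))),
      ‖recipErr (y / s) * Real.exp (-y)‖ ≤ K * Real.exp (-y) + |Real.log y| * Real.exp (-y) := by
    intro s hs hs1
    refine (ae_restrict_iff' measurableSet_Ioi).mpr (ae_of_all _ fun y hy ↦ ?_)
    rw [norm_mul, Real.norm_eq_abs, Real.norm_of_nonneg (Real.exp_pos _).le, ← add_mul]
    gcongr
    exact hb y s hy hs hs1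
  refine ⟨?_, fun s hs hs1 ↦ hbi.mono' (hm s) (hle s hs hs1)⟩
  have hlim := tendsto_integral_filter_of_dominated_convergence
    (μ := volume.restrict (Set.Ioi (0 : ℝ))) (l := 𝓝[>] (0 : ℝ))
    (F := fun s y ↦ recipErr (y / s) * Real.exp (-y)) (f := fun y ↦ c * Real.exp (-y)) _
    (Eventually.of_forall hm) ?_ hbi ?_
  · rw [integral_const_mul, integral_exp_neg_Ioi_zero, mul_one] at hlim
    exact hlim
  · filter_upwards [Ioo_mem_nhdsGT (zero_lt_one' ℝ)] with s hs using hle s hs.1 hs.2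
  · refine (ae_restrict_iff' measurableSet_Ioi).mpr (ae_of_all _ fun y hy ↦ ?_)
    have hy : 0 < y := hy
    have hys : Tendsto (fun s : ℝ ↦ y / s) (𝓝[>] 0) atTop := by
      simp only [div_eq_mul_inv]
      exact tendsto_inv_nhdsGT_zero.const_mul_atTop hy
    exact (h.comp hys).mul_const _

/-- Identification of the constant in Mertens' second theorem. -/
theorem mertens_const_eq {c : ℝ}
    (hc : Tendsto (fun n : ℕ ↦ primeRecip n - Real.log (Real.log n)) atTop (𝓝 c)) :
    c = Real.eulerMascheroniConstant - logRemSum := by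
  obtain ⟨h1, h2⟩ := tendsto_integral_recipErr (tendsto_recipErr hc)
  have hli : IntegrableOn (fun y : ℝ ↦ Real.log y * Real.exp (-y)) (Set.Ioi 0) := by
    refine integrableOn_abs_log_mul_exp.mono' (by fun_prop) (ae_of_all _ fun y ↦ ?_)
    rw [norm_mul, Real.norm_eq_abs, Real.norm_of_nonneg (Real.exp_pos _).le]
  have h3 : Tendsto (fun s : ℝ ↦ (∑' p : Nat.Primes, (p : ℝ) ^ (-(1 + s))) + Real.log s) (𝓝[>] 0)
      (𝓝 (c + -Real.eulerMascheroniConstant)) := by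
    refine (h1.add_const (-Real.eulerMascheroniConstant)).congr' ?_
    filter_upwards [Ioo_mem_nhdsGT (zero_lt_one' ℝ)] with s hs
    rw [tsum_prime_eq_integral hs.1, ← integral_log_mul_exp, ← integral_add (h2 s hs.1 hs.2) hli]
    have e : ∫ y in Set.Ioi (0 : ℝ), primeRecip ⌊Real.exp (y / s)⌋₊ * Real.exp (-y) =
        ∫ y in Set.Ioi (0 : ℝ), ((recipErr (y / s) * Real.exp (-y) + Real.log y * Real.exp (-y)) -
          Real.log s * Real.exp (-y)) := by
      refine setIntegral_congr_fun measurableSet_Ioi fun y hy ↦ ?_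
      have hy : 0 < y := hy
      simp only [recipErr]
      rw [Real.log_div hy.ne' hs.1.ne']
      ring
    have hadd : IntegrableOn (fun y ↦ recipErr (y / s) * Real.exp (-y) + Real.log y * Real.exp (-y))
        (Set.Ioi 0) := (h2 s hs.1 hs.2).add hli
    rw [e, integral_sub hadd ((integrableOn_exp_neg_Ioi 0).const_mul _),
      integral_const_mul, integral_exp_neg_Ioi_zero]
    ring
  have := tendsto_nhds_unique h3 tendsto_tsum_prime
  linarith

/-! ### The product over primes -/

lemma sum_logRem_le (n : ℕ) :
    ∑ p ∈ (Finset.range (n + 1)).filter Nat.Prime, logRem (1 / (p : ℝ)) ≤ logRemSum := by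
  have h1 : ∀ p : ℕ, p.Prime → (1 : ℝ) / p < 1 := fun p hp ↦ by
    rw [div_lt_one (by exact_mod_cast hp.pos)]; exact_mod_cast hp.one_lt
  have h2 : ∀ p : Nat.Primes, ((p : ℕ) : ℝ) ^ (-1 : ℝ) = 1 / (p : ℕ) := fun p ↦ by
    rw [Real.rpow_neg_one, one_div]
  have h3 := summable_logRem (r := -1) le_rfl
  rw [logRemSum]
  simp only [h2] at h3 ⊢
  rw [← Finset.sum_subtype_eq_sum_filter]
  have h4 : HasSum (fun p : {p : ℕ // p.Prime} ↦ logRem (1 / (p : ℕ)))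
    (∑' p : Nat.Primes, logRem (1 / (p : ℕ))) := h3.hasSum
  exact sum_le_hasSum _ (fun p _ ↦ logRem_nonneg (h1 p p.prop)) h4

/-- The logarithm of the product, split into `∑ 1/p` and the convergent remainder. -/
lemma prod_eq_exp (n : ℕ) :
    ∏ p ∈ (Finset.range (n + 1)).filter Nat.Prime, (1 - 1 / (p : ℝ)) =
      Real.exp (-(primeRecip n +
        ∑ p ∈ (Finset.range (n + 1)).filter Nat.Prime, logRem (1 / (p : ℝ)))) := by
  rw [primeRecip, ← Finset.sum_add_distrib, ← Finset.sum_neg_distrib, Real.exp_sum]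
  refine Finset.prod_congr rfl fun p hp ↦ ?_
  have hp : (1 : ℝ) < p := by exact_mod_cast (Finset.mem_filter.mp hp).2.one_lt
  have h1 : (1 : ℝ) / p < 1 := by rw [div_lt_one (by linarith)]; exact hp
  rw [logRem, show -(1 / (p : ℝ) + (-Real.log (1 - 1 / p) - 1 / p)) = Real.log (1 - 1 / p) by ring,
    Real.exp_log (by linarith)]

/-- `b ↦ b - b³/2` is increasing on `[0, 1/2]`; here `b` is the reciprocal of a logarithm. -/
lemma inv_mul_one_sub_le {M L : ℝ} (hM : 2 ≤ M) (hL : M ≤ L) :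
    1 / L * (1 - 1 / (2 * L ^ 2)) ≤ 1 / M * (1 - 1 / (2 * M ^ 2)) := by
  have e : ∀ t : ℝ, 1 / t * (1 - 1 / (2 * t ^ 2)) = 1 / t - (1 / t) ^ 3 / 2 := fun t ↦ by ring
  have h1 : 1 / L ≤ 1 / M := one_div_le_one_div_of_le (by linarith) hL
  have h2 : 1 / M ≤ 1 / 2 := one_div_le_one_div_of_le (by norm_num) hM
  have h3 : 0 ≤ 1 / L := by have : 0 < L := by linarith
                            positivity
  rw [e, e]
  set a := 1 / M
  set b := 1 / L
  have h4 : a ^ 2 + a * b + b ^ 2 ≤ 2 := by nlinarith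
  nlinarith [mul_nonneg (sub_nonneg.mpr h1) (sub_nonneg.mpr h4)]

/-- The lower bound at integers, with the stronger relative error `K / log³ n`. -/
lemma exists_le_prod : ∃ K : ℝ, ∀ᶠ n : ℕ in atTop,
    Real.exp (-Real.eulerMascheroniConstant) / Real.log n * (1 - K / Real.log n ^ 3) ≤
      ∏ p ∈ (Finset.range (n + 1)).filter Nat.Prime, (1 - 1 / (p : ℝ)) := by
  obtain ⟨c, K, hK, h⟩ := exists_abs_primeRecip_sub_le
  have hlog : Tendsto (fun n : ℕ ↦ Real.log n) atTop atTop :=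
    Real.tendsto_log_atTop.comp tendsto_natCast_atTop_atTop
  have h0 : Tendsto (fun n : ℕ ↦ K / Real.log n ^ 3) atTop (𝓝 0) :=
    ((tendsto_pow_atTop three_ne_zero).comp hlog).const_div_atTop K
  have hc : Tendsto (fun n : ℕ ↦ primeRecip n - Real.log (Real.log n)) atTop (𝓝 c) := by
    rw [tendsto_iff_dist_tendsto_zero]
    exact squeeze_zero' (Eventually.of_forall fun _ ↦ dist_nonneg) h h0
  have hγ := mertens_const_eq hc
  refine ⟨K, ?_⟩
  filter_upwards [h, hlog.eventually_gt_atTop 0] with n hn hl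
  have h1 := (abs_le.mp hn).2
  have h2 := sum_logRem_le n
  rw [prod_eq_exp]
  calc _ ≤ Real.exp (-Real.eulerMascheroniConstant) / Real.log n *
        Real.exp (-(K / Real.log n ^ 3)) := by
        gcongr
        linarith [Real.add_one_le_exp (-(K / Real.log n ^ 3))]
    _ = Real.exp (-Real.eulerMascheroniConstant - Real.log (Real.log n) -
        K / Real.log n ^ 3) := by
        rw [Real.exp_sub, Real.exp_sub, Real.exp_log hl, Real.exp_neg (K / _)]; rfl
    _ ≤ _ := Real.exp_le_exp.mpr (by linarith)

end MertensThird

/-- **Mertens' third theorem, explicit lower bound (17).** For all sufficiently large `x`,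
`∏_{p ≤ x} (1 − 1/p) ≥ (e^{−γ}/log x)(1 − 1/(2 log² x))`. -/
theorem mertens_third_lower_bound :
    ∃ x₀ : ℝ, ∀ x : ℝ, x₀ ≤ x →
      (∏ p ∈ (Finset.range (⌊x⌋₊ + 1)).filter Nat.Prime, (1 - 1 / (p : ℝ))) ≥
        Real.exp (-Real.eulerMascheroniConstant) / Real.log x *
          (1 - 1 / (2 * Real.log x ^ 2)) := by
  obtain ⟨K, hK⟩ := MertensThird.exists_le_prod
  have hlog : Filter.Tendsto (fun n : ℕ ↦ Real.log n) Filter.atTop Filter.atTop :=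
    Real.tendsto_log_atTop.comp tendsto_natCast_atTop_atTop
  have hn := hK.and (hlog.eventually_ge_atTop (max 2 (2 * K)))
  obtain ⟨x₀, hx₀⟩ := Filter.eventually_atTop.mp
    (tendsto_nat_floor_atTop.eventually (α := ℝ) hn)
  refine ⟨max x₀ 1, fun x hx ↦ ?_⟩
  have hx1 : 1 ≤ x := (le_max_right _ _).trans hx
  obtain ⟨h1, h2⟩ := hx₀ x ((le_max_left _ _).trans hx)
  set M := Real.log ⌊x⌋₊ with hM
  have hM2 : 2 ≤ M := (le_max_left _ _).trans h2
  have hMK : 2 * K ≤ M := (le_max_right _ _).trans h2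
  have hML : M ≤ Real.log x := Real.log_le_log
    (by exact_mod_cast Nat.floor_pos.mpr hx1) (Nat.floor_le (by linarith))
  have h3 := MertensThird.inv_mul_one_sub_le hM2 hML
  have h4 : K / M ^ 3 ≤ 1 / (2 * M ^ 2) := by
    rw [div_le_div_iff₀ (by positivity) (by positivity)]
    nlinarith [mul_le_mul_of_nonneg_right hMK (sq_nonneg M)]
  calc Real.exp (-Real.eulerMascheroniConstant) / Real.log x * (1 - 1 / (2 * Real.log x ^ 2))
      = Real.exp (-Real.eulerMascheroniConstant) *
          (1 / Real.log x * (1 - 1 / (2 * Real.log x ^ 2))) := by ring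
    _ ≤ Real.exp (-Real.eulerMascheroniConstant) * (1 / M * (1 - 1 / (2 * M ^ 2))) := by gcongr
    _ = Real.exp (-Real.eulerMascheroniConstant) / M * (1 - 1 / (2 * M ^ 2)) := by ring
    _ ≤ Real.exp (-Real.eulerMascheroniConstant) / M * (1 - K / M ^ 3) := by gcongr
    _ ≤ _ := h1
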